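/- arXiv:2108.07529 — 6 statements merged into one kernel-verified Lean document; each statement's English description precedes it below -/
import Mathlib

section
/- Higher-order Euler property: let X be an Euler vector field on an open set U ⊆ ℝ^d × ℝ^d and let k ≥ 1 be an integer. If a smooth function f : U → ℝ vanishes to order k on Δ ∩ U, then the function Xf − k·f vanishes to order k + 1 on Δ ∩ U. -/
open Set

noncomputable section

/-- Points of `ℝ^d × ℝ^d`. -/
abbrev Pt (d : ℕ) := EuclideanSpace ℝ (Fin d) × EuclideanSpace ℝ (Fin d)

/-- The diagonal `Δ = {(x,x)}` in `ℝ^d × ℝ^d`. -/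
def Diag (d : ℕ) : Set (Pt d) := {p | p.1 = p.2}

/-- The action `Xf : q ↦ Df(q)(X(q))` of a vector field on a function. -/
def vfApply {d : ℕ} (X : Pt d → Pt d) (f : Pt d → ℝ) : Pt d → ℝ :=
  fun q => fderiv ℝ f q (X q)

/-- `g` vanishes to order `m` on `Δ ∩ U`: all iterated Fréchet derivatives of order `< m`
vanish at every point of `Δ ∩ U`. -/
def VanishesToOrder {d : ℕ} (m : ℕ) (g : Pt d → ℝ) (U : Set (Pt d)) : Prop :=
  ∀ k < m, ∀ p ∈ Diag d ∩ U, iteratedFDeriv ℝ k g p = 0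

/-- `X` is an Euler vector field on the open set `U ⊆ ℝ^d × ℝ^d`: it is smooth, its first
`d` components vanish identically, and for every smooth `f` vanishing on `Δ ∩ U` the
function `Xf − f` vanishes to order `2` on `Δ ∩ U`. -/
structure IsEulerVF {d : ℕ} (X : Pt d → Pt d) (U : Set (Pt d)) : Prop where
  smooth : ContDiffOn ℝ (⊤ : ℕ∞) X U
  fiber : ∀ q ∈ U, (X q).1 = 0
  euler : ∀ f : Pt d → ℝ, ContDiffOn ℝ (⊤ : ℕ∞) f U → (∀ p ∈ Diag d ∩ U, f p = 0) →
    VanishesToOrder 2 (fun q => vfApply X f q - f q) U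


section helpers

variable {d : ℕ} {U : Set (Pt d)} {F : Type*} [NormedAddCommGroup F] [NormedSpace ℝ F]

/-- Vector-valued version of `VanishesToOrder`. -/
def VTO (m : ℕ) (g : Pt d → F) (U : Set (Pt d)) : Prop :=
  ∀ k < m, ∀ p ∈ Diag d ∩ U, iteratedFDeriv ℝ k g p = 0

lemma smooth_fderiv (hU : IsOpen U) {g : Pt d → F} (hg : ContDiffOn ℝ (⊤ : ℕ∞) g U) :
    ContDiffOn ℝ (⊤ : ℕ∞) (fderiv ℝ g) U :=
  hg.fderiv_of_isOpen hU (by exact_mod_cast le_rfl)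

lemma smooth_at (hU : IsOpen U) {g : Pt d → F} (hg : ContDiffOn ℝ (⊤ : ℕ∞) g U) {p : Pt d}
    (hp : p ∈ U) : ContDiffAt ℝ (⊤ : ℕ∞) g p := hg.contDiffAt (hU.mem_nhds hp)

lemma diff_at (hU : IsOpen U) {g : Pt d → F} (hg : ContDiffOn ℝ (⊤ : ℕ∞) g U) {p : Pt d}
    (hp : p ∈ U) : DifferentiableAt ℝ g p :=
  (smooth_at hU hg hp).differentiableAt (by simp)

lemma smooth_dir (hU : IsOpen U) {g : Pt d → F} (hg : ContDiffOn ℝ (⊤ : ℕ∞) g U) (v : Pt d) :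
    ContDiffOn ℝ (⊤ : ℕ∞) (fun q => fderiv ℝ g q v) U :=
  (smooth_fderiv hU hg).clm_apply contDiffOn_const

lemma VTO.congr (hU : IsOpen U) {m : ℕ} {g h : Pt d → F} (hg : VTO m g U)
    (e : ∀ q ∈ U, h q = g q) : VTO m h U := by
  intro k hk p hp
  have : h =ᶠ[nhds p] g := Filter.eventually_of_mem (hU.mem_nhds hp.2) e
  rw [(Filter.EventuallyEq.iteratedFDeriv ℝ this k).eq_of_nhds]
  exact hg k hk p hp

lemma VTO.mono {m n : ℕ} {g : Pt d → F} (hg : VTO m g U) (h : n ≤ m) : VTO n g U :=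
  fun k hk => hg k (hk.trans_le h)

lemma VTO.value {m : ℕ} {g : Pt d → F} (hg : VTO (m + 1) g U) :
    ∀ p ∈ Diag d ∩ U, g p = 0 := by
  intro p hp
  have := hg 0 (Nat.succ_pos _) p hp
  rw [← norm_eq_zero, ← norm_iteratedFDeriv_zero (𝕜 := ℝ), this, norm_zero]

lemma VTO.add (hU : IsOpen U) {m : ℕ} {g h : Pt d → F} (hg : VTO m g U) (hh : VTO m h U)
    (sg : ContDiffOn ℝ (⊤ : ℕ∞) g U) (sh : ContDiffOn ℝ (⊤ : ℕ∞) h U) :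
    VTO m (fun q => g q + h q) U := by
  intro k hk p hp
  have := iteratedFDeriv_add_apply (i := k) ((smooth_at hU sg hp.2).of_le (by exact_mod_cast le_top))
    ((smooth_at hU sh hp.2).of_le (by exact_mod_cast le_top))
  have e : (fun q => g q + h q) = g + h := rfl
  rw [e, this, hg k hk p hp, hh k hk p hp, add_zero]

lemma VTO.neg {m : ℕ} {g : Pt d → F} (hg : VTO m g U) : VTO m (fun q => - g q) U := by
  intro k hk p hp
  have e : (fun q => - g q) = - g := rfl
  rw [e, iteratedFDeriv_neg_apply, hg k hk p hp, neg_zero]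

lemma VTO.fderiv {m : ℕ} {g : Pt d → F} (hg : VTO (m + 1) g U) : VTO m (fderiv ℝ g) U := by
  intro k hk p hp
  rw [← norm_eq_zero, norm_iteratedFDeriv_fderiv, hg (k + 1) (by omega) p hp, norm_zero]

lemma VTO.mul (hU : IsOpen U) {m : ℕ} {g : Pt d → Pt d →L[ℝ] F} {R : Pt d → Pt d}
    (hg : VTO m g U) (sg : ContDiffOn ℝ (⊤ : ℕ∞) g U) (sR : ContDiffOn ℝ (⊤ : ℕ∞) R U)
    (hR : ∀ p ∈ Diag d ∩ U, R p = 0) : VTO (m + 1) (fun q => g q (R q)) U := by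
  intro k hk p hp
  rw [← norm_le_zero_iff]
  have key := norm_iteratedFDerivWithin_clm_apply sg sR hU.uniqueDiffOn hp.2
    (n := k) (by exact_mod_cast le_top)
  simp only [iteratedFDerivWithin_of_isOpen _ hU hp.2] at key
  refine key.trans (le_of_eq ?_)
  refine Finset.sum_eq_zero fun i hi => ?_
  by_cases h : i < m
  · rw [hg i h p hp]; simp
  · have : k - i = 0 := by omega
    rw [this, norm_iteratedFDeriv_zero, hR p hp]; simp

lemma VTO.const_clm (hU : IsOpen U) {m : ℕ} {g : Pt d → Pt d →L[ℝ] F}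
    (hg : VTO m g U) (sg : ContDiffOn ℝ (⊤ : ℕ∞) g U) (v : Pt d) :
    VTO m (fun q => g q v) U := by
  intro k hk p hp
  rw [← norm_le_zero_iff]
  refine (norm_iteratedFDeriv_clm_apply_const (smooth_at hU sg hp.2)
    (n := k) (by exact_mod_cast le_top)).trans (le_of_eq ?_)
  rw [hg k hk p hp]; simp

lemma VTO.dir (hU : IsOpen U) {m : ℕ} {g : Pt d → F} (hg : VTO (m + 1) g U)
    (sg : ContDiffOn ℝ (⊤ : ℕ∞) g U) (v : Pt d) : VTO m (fun q => _root_.fderiv ℝ g q v) U :=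
  hg.fderiv.const_clm hU (smooth_fderiv hU sg) v

lemma VTO.succ_of (hU : IsOpen U) {m : ℕ} {g : Pt d → F} (sg : ContDiffOn ℝ (⊤ : ℕ∞) g U)
    (h0 : ∀ p ∈ Diag d ∩ U, g p = 0)
    (h : ∀ v, VTO m (fun q => _root_.fderiv ℝ g q v) U) : VTO (m + 1) g U := by
  intro k hk p hp
  cases k with
  | zero => rw [← norm_eq_zero, norm_iteratedFDeriv_zero, h0 p hp, norm_zero]
  | succ k =>
    ext u
    rw [iteratedFDeriv_succ_apply_right]
    have := h (u (Fin.last k)) k (by omega) p hp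
    have e := (ContinuousLinearMap.apply ℝ F (u (Fin.last k))).iteratedFDeriv_comp_left
      (smooth_at hU (smooth_fderiv hU sg) hp.2) (i := k) (by exact_mod_cast le_top)
    have e2 : (ContinuousLinearMap.apply ℝ F (u (Fin.last k))) ∘ _root_.fderiv ℝ g
      = (fun q => _root_.fderiv ℝ g q (u (Fin.last k))) := rfl
    rw [e2, this] at e
    have := congrArg (fun T => T (Fin.init u)) e
    simpa using this.symm

lemma dir_comm (hU : IsOpen U) {g : Pt d → F} (sg : ContDiffOn ℝ (⊤ : ℕ∞) g U) {q : Pt d}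
    (hq : q ∈ U) (v w : Pt d) :
    fderiv ℝ (fderiv ℝ g) q v w = fderiv ℝ (fderiv ℝ g) q w v :=
  ((smooth_at hU sg hq).isSymmSndFDerivAt (by
    rw [minSmoothness_of_isRCLikeNormedField]
    exact WithTop.coe_le_coe.2 (le_top : (2 : ℕ∞) ≤ ⊤))) v w

lemma dir_dir (hU : IsOpen U) {g : Pt d → F} (sg : ContDiffOn ℝ (⊤ : ℕ∞) g U) {q : Pt d}
    (hq : q ∈ U) (v w : Pt d) :
    fderiv ℝ (fun x => fderiv ℝ g x v) q w = fderiv ℝ (fderiv ℝ g) q w v := by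
  rw [fderiv_clm_apply (diff_at hU (smooth_fderiv hU sg) hq) (by fun_prop)]
  simp

lemma VTO.tangent (hU : IsOpen U) (w : EuclideanSpace ℝ (Fin d)) {m : ℕ} :
    ∀ {g : Pt d → F}, VTO m g U → ContDiffOn ℝ (⊤ : ℕ∞) g U →
      VTO m (fun q => _root_.fderiv ℝ g q (w, w)) U := by
  induction m with
  | zero => intro g _ _ k hk; omega
  | succ m ih =>
    intro g hg sg
    refine VTO.succ_of hU (smooth_dir hU sg _) ?_ ?_
    · intro p hp
      have h1 : HasDerivAt (fun t : ℝ => p + t • ((w, w) : Pt d)) (w, w) 0 := by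
        simpa using ((hasDerivAt_id (0 : ℝ)).smul_const ((w, w) : Pt d)).const_add p
      have h2 : HasFDerivAt g (_root_.fderiv ℝ g p) (p + (0 : ℝ) • ((w, w) : Pt d)) := by
        simpa using (diff_at hU sg hp.2).hasFDerivAt
      have h3 := h2.comp_hasDerivAt (0 : ℝ) h1
      have h4 : (g ∘ fun t : ℝ => p + t • ((w, w) : Pt d)) =ᶠ[nhds 0] fun _ => 0 := by
        have : ∀ᶠ t : ℝ in nhds 0, p + t • ((w, w) : Pt d) ∈ U := by
          refine h1.continuousAt.eventually_mem (hU.mem_nhds ?_)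
          simpa using hp.2
        filter_upwards [this] with t ht
        refine hg.value _ ⟨?_, ht⟩
        have := hp.1
        simp only [Diag, mem_setOf_eq] at this ⊢
        simp [this]
      exact h3.unique ((hasDerivAt_const (0 : ℝ) (0 : F)).congr_of_eventuallyEq h4)
    · intro v
      refine (ih (hg.dir hU sg v) (smooth_dir hU sg v)).congr hU fun q hq => ?_
      rw [dir_dir hU sg hq, dir_dir hU sg hq, dir_comm hU sg hq]

lemma euler_main (hU : IsOpen U) {X : Pt d → Pt d} (sX : ContDiffOn ℝ (⊤ : ℕ∞) X U)
    (X0 : ∀ p ∈ Diag d ∩ U, X p = 0)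
    (X1 : ∀ p ∈ Diag d ∩ U, ∀ v, _root_.fderiv ℝ X p v = (0, v.2 - v.1)) (k : ℕ) :
    ∀ f : Pt d → ℝ, ContDiffOn ℝ (⊤ : ℕ∞) f U → VTO k f U →
      VTO (k + 1) (fun q => _root_.fderiv ℝ f q (X q) - (k : ℝ) * f q) U := by
  induction k with
  | zero =>
    intro f sf _ k hk p hp
    obtain rfl : k = 0 := by omega
    rw [← norm_eq_zero, norm_iteratedFDeriv_zero, X0 p hp]
    simp
  | succ k ih =>
    intro f sf hf
    have sXf : ContDiffOn ℝ (⊤ : ℕ∞) (fun q => _root_.fderiv ℝ f q (X q)) U :=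
      (smooth_fderiv hU sf).clm_apply sX
    refine VTO.succ_of hU (sXf.sub (contDiffOn_const.mul sf)) ?_ ?_
    · intro p hp
      rw [X0 p hp, hf.value p hp]; simp
    · intro v
      have sR : ContDiffOn ℝ (⊤ : ℕ∞)
          (fun q => _root_.fderiv ℝ X q v - ((0, v.2 - v.1) : Pt d)) U :=
        (smooth_dir hU sX v).sub contDiffOn_const
      have a1 := ih _ (smooth_dir hU sf v) (hf.dir hU sf v)
      have a2 := hf.fderiv.mul hU (smooth_fderiv hU sf) sR
        (fun p hp => by rw [X1 p hp v, sub_self])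
      have a3 := (hf.tangent hU v.1 sf).neg
      have s1 : ContDiffOn ℝ (⊤ : ℕ∞) (fun q =>
          _root_.fderiv ℝ (fun x => _root_.fderiv ℝ f x v) q (X q)
            - (k : ℝ) * _root_.fderiv ℝ f q v) U :=
        ((smooth_fderiv hU (smooth_dir hU sf v)).clm_apply sX).sub
          (contDiffOn_const.mul (smooth_dir hU sf v))
      have s2 := (smooth_fderiv hU sf).clm_apply sR
      have s3 := (smooth_dir hU sf (v.1, v.1)).neg
      refine ((a1.add hU a2 s1 s2).add hU a3 (s1.add s2) s3).congr hU fun q hq => ?_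
      have df := diff_at hU (smooth_fderiv hU sf) hq
      have dX := diff_at hU sX hq
      rw [fderiv_fun_sub (diff_at hU sXf hq) ((diff_at hU sf hq).const_mul _),
        fderiv_clm_apply df dX, fderiv_const_mul (diff_at hU sf hq), dir_dir hU sf hq,
        dir_comm hU sf hq (X q) v]
      have hv : ((0, v.2 - v.1) : Pt d) = v - (v.1, v.1) := by
        ext <;> simp
      rw [hv]
      simp only [ContinuousLinearMap.sub_apply, ContinuousLinearMap.add_apply, map_sub,
        ContinuousLinearMap.smul_apply, ContinuousLinearMap.comp_apply,
        ContinuousLinearMap.flip_apply, smul_eq_mul]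
      push_cast
      ring

lemma euler_coord (hU : IsOpen U) {X : Pt d → Pt d} (hX : IsEulerVF X U) {p : Pt d}
    (hp : p ∈ Diag d ∩ U) :
    X p = 0 ∧ ∀ v, _root_.fderiv ℝ X p v = (0, v.2 - v.1) := by
  have dX := diff_at hU hX.smooth hp.2
  have h1 : ∀ v, (_root_.fderiv ℝ X p v).1 = 0 := by
    intro v
    have e : (fun q => (X q).1) =ᶠ[nhds p] fun _ => 0 :=
      Filter.eventually_of_mem (hU.mem_nhds hp.2) hX.fiber
    have := (dX.hasFDerivAt.fst).unique ((hasFDerivAt_const _ p).congr_of_eventuallyEq e)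
    simpa using congrArg (fun T => T v) this
  have key : ∀ i, (X p).2 i = 0 ∧ ∀ v, (_root_.fderiv ℝ X p v).2 i = v.2 i - v.1 i := by
    intro i
    let P : EuclideanSpace ℝ (Fin d) →L[ℝ] ℝ := EuclideanSpace.proj i
    let L : Pt d →L[ℝ] ℝ := P.comp (ContinuousLinearMap.snd ℝ _ _) -
      P.comp (ContinuousLinearMap.fst ℝ _ _)
    have hL : ∀ q, L q = q.2 i - q.1 i := fun q => rfl
    have hp1 : p.1 = p.2 := hp.1
    have h := hX.euler L L.contDiff.contDiffOn (fun q hq => by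
      have : q.1 = q.2 := hq.1
      rw [hL, this, sub_self])
    have h' : VTO 2 (fun q => L (X q) - L q) U := by
      have e : (fun q => vfApply X L q - L q) = fun q => L (X q) - L q := by
        funext q; simp [vfApply]
      rw [← e]; exact h
    constructor
    · have := h'.value p hp
      simp only [hL, hX.fiber p hp.2, hp1] at this
      simpa using this
    · intro v
      have s : ContDiffOn ℝ (⊤ : ℕ∞) (fun q => L (X q) - L q) U :=
        (L.contDiff.comp_contDiffOn hX.smooth).sub L.contDiff.contDiffOn
      have h2 := (h'.dir hU s v).value p hp
      have h3 : HasFDerivAt (fun q => L (X q) - L q) (L.comp (_root_.fderiv ℝ X p) - L) p :=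
        (L.hasFDerivAt.comp p dX.hasFDerivAt).sub L.hasFDerivAt
      rw [h3.fderiv] at h2
      simp only [ContinuousLinearMap.sub_apply, ContinuousLinearMap.comp_apply, hL, h1] at h2
      simp at h2
      linarith
  constructor
  · refine Prod.ext (hX.fiber p hp.2) ?_
    ext i; simpa using (key i).1
  · intro v
    refine Prod.ext (h1 v) ?_
    ext i; simpa using (key i).2 v

end helpers

/-- higher-order Euler property: if `X` is an Euler vector field on an
open set `U ⊆ ℝ^d × ℝ^d`, `k ≥ 1`, and `f` is smooth on `U` and vanishes to order `k` on
`Δ ∩ U`, then `Xf − k·f` vanishes to order `k + 1` on `Δ ∩ U`. -/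
theorem euler_vanishesToOrder_succ {d : ℕ} {X : Pt d → Pt d} {U : Set (Pt d)}
    (hU : IsOpen U) (hX : IsEulerVF X U) (k : ℕ) (hk : 1 ≤ k) (f : Pt d → ℝ)
    (hf : ContDiffOn ℝ (⊤ : ℕ∞) f U) (hvan : VanishesToOrder k f U) :
    VanishesToOrder (k + 1) (fun q => vfApply X f q - (k : ℝ) * f q) U := by
  exact euler_main hU hX.smooth (fun p hp => (euler_coord hU hX hp).1)
    (fun p hp => (euler_coord hU hX hp).2) k f hf hvan
end
end

section
/- Linearization of an Euler vector field at the diagonal (content of the Lyapunov-bundle lemma): let X be an Euler vector field on an open set U ⊆ ℝ^d × ℝ^d and let p = (a, a) ∈ Δ ∩ U. Then X(p) = 0, and the derivative DX(p) : ℝ^d × ℝ^d → ℝ^d × ℝ^d is given by DX(p)(u, v) = (0, v − u). In particular DX(p) ∘ DX(p) = DX(p) (its only eigenvalues are 0 and 1), its kernel is the tangent space {(u, u) : u ∈ ℝ^d} of the diagonal, and its range is the subspace N = {0} × ℝ^d, on which DX(p) acts as the identity. -/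
open Set

noncomputable section

/-- linearization of an Euler vector field at the diagonal: if `X` is an
Euler vector field on an open set `U ⊆ ℝ^d × ℝ^d` and `p = (a,a) ∈ Δ ∩ U`, then `X(p) = 0`
and `DX(p)(u,v) = (0, v − u)`; in particular `DX(p)` is idempotent, its kernel is the
tangent space of the diagonal, and its range is `N = {0} × ℝ^d`, on which it acts as the
identity. -/
theorem euler_linearization_at_diagonal {d : ℕ} {X : Pt d → Pt d} {U : Set (Pt d)}
    (hU : IsOpen U) (hX : IsEulerVF X U) (p : Pt d) (hp : p ∈ Diag d ∩ U) :
    X p = 0 ∧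
    (∀ u v : EuclideanSpace ℝ (Fin d), fderiv ℝ X p (u, v) = (0, v - u)) ∧
    (fderiv ℝ X p).comp (fderiv ℝ X p) = fderiv ℝ X p ∧
    (∀ w : Pt d, fderiv ℝ X p w = 0 ↔ w.1 = w.2) ∧
    (∀ w : Pt d, (∃ u : Pt d, fderiv ℝ X p u = w) ↔ w.1 = 0) ∧
    (∀ w : Pt d, w.1 = 0 → fderiv ℝ X p w = w) := by
  have hU' : U ∈ nhds p := hU.mem_nhds hp.2
  have hd : DifferentiableAt ℝ X p :=
    (hX.smooth.contDiffAt hU').differentiableAt (by simp)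
  have hpd : p.1 = p.2 := hp.1
  -- the test functions `y i - x i`
  have key : ∀ i : Fin d, (X p).2 i - (X p).1 i = 0 ∧
      ∀ w : Pt d, (fderiv ℝ X p w).2 i - (fderiv ℝ X p w).1 i = w.2 i - w.1 i := by
    intro i
    let L : Pt d →L[ℝ] ℝ := (EuclideanSpace.proj i).comp
      (ContinuousLinearMap.snd ℝ _ _ - ContinuousLinearMap.fst ℝ _ _)
    have hL : ∀ w : Pt d, L w = w.2 i - w.1 i := fun w => by simp [L]
    have hv := hX.euler L L.contDiff.contDiffOn (fun q hq => by
      have hq1 : q.1 = q.2 := hq.1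
      rw [hL, hq1, sub_self])
    have hfun : (fun q => vfApply X L q - L q) = fun q => L (X q) - L q := by
      funext q
      simp [vfApply]
    rw [hfun] at hv
    have h0 := hv 0 (by norm_num) p hp
    have h1 := hv 1 (by norm_num) p hp
    constructor
    · have h := congrArg (fun m => m 0) h0
      simp only [iteratedFDeriv_zero_apply, ContinuousMultilinearMap.zero_apply] at h
      rw [hL, hL, hpd, sub_self, sub_zero] at h
      exact h
    · intro w
      have h := congrArg (fun m => m (fun _ => w)) h1
      simp only [iteratedFDeriv_one_apply, ContinuousMultilinearMap.zero_apply] at h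
      have hder : HasFDerivAt (fun q => L (X q) - L q) (L.comp (fderiv ℝ X p) - L) p :=
        (L.hasFDerivAt.comp p hd.hasFDerivAt).sub L.hasFDerivAt
      rw [hder.fderiv] at h
      have h2 : L (fderiv ℝ X p w) - L w = 0 := h
      rw [hL, hL] at h2
      linarith
  have hfst : ∀ w : Pt d, (fderiv ℝ X p w).1 = 0 := by
    intro w
    have h1 : HasFDerivAt (fun q => (X q).1)
        ((ContinuousLinearMap.fst ℝ _ _).comp (fderiv ℝ X p)) p := hd.hasFDerivAt.fst
    have h2 : HasFDerivAt (fun q => (X q).1)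
        (0 : Pt d →L[ℝ] EuclideanSpace ℝ (Fin d)) p := by
      refine (hasFDerivAt_const (0 : EuclideanSpace ℝ (Fin d)) p).congr_of_eventuallyEq ?_
      filter_upwards [hU'] with q hq using hX.fiber q hq
    have h3 := congrArg (fun m => m w) (h1.unique h2)
    exact h3
  have hD : ∀ w : Pt d, fderiv ℝ X p w = (0, w.2 - w.1) := by
    intro w
    refine Prod.ext (hfst w) ?_
    ext i
    have h := (key i).2 w
    rw [hfst w] at h
    simpa using h
  refine ⟨?_, fun u v => hD (u, v), ?_, ?_, ?_, ?_⟩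
  · refine Prod.ext (hX.fiber p hp.2) ?_
    ext i
    have h := (key i).1
    rw [hX.fiber p hp.2] at h
    simpa using h
  · refine ContinuousLinearMap.ext fun w => ?_
    rw [ContinuousLinearMap.comp_apply, hD (fderiv ℝ X p w), hD w, sub_zero]
  · intro w
    rw [hD w, Prod.mk_eq_zero, sub_eq_zero]
    exact ⟨fun h => h.2.symm, fun h => ⟨rfl, h.symm⟩⟩
  · intro w
    constructor
    · rintro ⟨u, rfl⟩
      exact hfst u
    · intro h
      refine ⟨w, ?_⟩
      rw [hD w, h, sub_zero]
      exact Prod.ext h.symm rfl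
  · intro w h
    rw [hD w, h, sub_zero]
    exact Prod.ext h.symm rfl
end
end

section
/- Normal form for Euler vector fields (Proposition 2.5): let X be an Euler vector field on an open set U ⊆ ℝ^d × ℝ^d and let p ∈ Δ ∩ U. Then there exist an open set V with p ∈ V ⊆ U and a smooth map h̃ : V → ℝ^d such that: (i) the map Ψ : V → ℝ^d × ℝ^d, Ψ(x₁, x₂) = (x₁, h̃(x₁, x₂)), is a smooth diffeomorphism from V onto an open subset of ℝ^d × ℝ^d (injective, with open image and smooth inverse); (ii) Δ ∩ V = {q ∈ V : h̃(q) = 0}; and (iii) X h̃ⁱ = h̃ⁱ on V for each component, i.e. D h̃(q)(X(q)) = h̃(q) for all q ∈ V. In these coordinates X takes the normal form X = Σᵢ hⁱ ∂_{hⁱ}. -/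
open Set

noncomputable section

set_option linter.unusedSectionVars false
namespace EulerNF

open scoped ContDiff

section Nem

universe u

variable {K : Type} [TopologicalSpace K] [CompactSpace K]

/-- Pointwise evaluation of a family of operators, as a bilinear continuous map. -/
def pointwiseApp (K : Type) [TopologicalSpace K] [CompactSpace K]
    (E F : Type u) [NormedAddCommGroup E] [NormedSpace ℝ E]
    [NormedAddCommGroup F] [NormedSpace ℝ F] :
    C(K, E →L[ℝ] F) →L[ℝ] (C(K, E) →L[ℝ] C(K, F)) :=
  LinearMap.mkContinuous₂
    (LinearMap.mk₂ ℝ (fun (A : C(K, E →L[ℝ] F)) (h : C(K, E)) =>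
        (⟨fun t => A t (h t), by fun_prop⟩ : C(K, F)))
      (by intros; ext; simp) (by intros; ext; simp) (by intros; ext; simp)
      (by intros; ext; simp)) 1
    (by
      intro A h
      rw [ContinuousMap.norm_le _ (by positivity)]
      intro t
      simp only [LinearMap.mk₂_apply, ContinuousMap.coe_mk, one_mul]
      exact ((A t).le_opNorm _).trans
        (mul_le_mul (A.norm_coe_le_norm t) (h.norm_coe_le_norm t) (by positivity) (by positivity)))

@[simp] lemma pointwiseApp_apply {E F : Type u} [NormedAddCommGroup E] [NormedSpace ℝ E]
    [NormedAddCommGroup F] [NormedSpace ℝ F] (A : C(K, E →L[ℝ] F)) (h : C(K, E)) (t : K) :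
    pointwiseApp K E F A h t = A t (h t) := rfl

lemma hasFDerivAt_postcomp {E F : Type u} [NormedAddCommGroup E] [NormedSpace ℝ E]
    [NormedAddCommGroup F] [NormedSpace ℝ F] (f : C(E, F)) (f' : C(E, E →L[ℝ] F))
    (hf : ∀ x, HasFDerivAt f (f' x) x) (u : C(K, E)) :
    HasFDerivAt (fun v : C(K, E) => f.comp v) (pointwiseApp K E F (f'.comp u)) u := by
  rw [hasFDerivAt_iff_isLittleO_nhds_zero, Asymptotics.isLittleO_iff]
  intro c hc
  have hcont : Continuous (fun v : C(K, E) => f'.comp v) := ContinuousMap.continuous_postcomp f'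
  obtain ⟨δ, hδ, H⟩ := (Metric.continuous_iff (α := C(K, E)) (β := C(K, E →L[ℝ] F))).1 hcont u c hc
  filter_upwards [Metric.ball_mem_nhds (0 : C(K, E)) hδ] with h hh
  rw [ContinuousMap.norm_le _ (by positivity)]
  intro t
  have key := Convex.norm_image_sub_le_of_norm_hasFDerivWithin_le'
    (f := f) (f' := f') (φ := f' (u t)) (C := c) (s := segment ℝ (u t) (u t + h t))
    (fun x _ => (hf x).hasFDerivWithinAt) (by
      intro x hx
      rw [segment_eq_image'] at hx
      obtain ⟨θ, hθ, rfl⟩ := hx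
      have h1 := H (u + θ • h) (by
        rw [dist_eq_norm, add_sub_cancel_left, norm_smul, Real.norm_of_nonneg hθ.1]
        have : ‖h‖ < δ := by simpa using hh
        nlinarith [hθ.2, norm_nonneg h])
      have h2 := (ContinuousMap.dist_apply_le_dist (f := f'.comp (u + θ • h)) (g := f'.comp u) t).trans
        h1.le
      simpa [dist_eq_norm] using h2) (convex_segment _ _) (left_mem_segment _ _ _)
      (right_mem_segment _ _ _)
  simp only [add_sub_cancel_left] at key
  calc _ ≤ c * ‖h t‖ := key
    _ ≤ c * ‖h‖ := by gcongr; exact h.norm_coe_le_norm t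

lemma contDiff_postcomp_nat (n : ℕ) : ∀ {E F : Type u} [NormedAddCommGroup E] [NormedSpace ℝ E]
    [NormedAddCommGroup F] [NormedSpace ℝ F] (f : C(E, F)) (_ : ContDiff ℝ ∞ f),
    ContDiff ℝ n (fun v : C(K, E) => f.comp v) := by
  induction n with
  | zero =>
    intro E F _ _ _ _ f hf
    exact contDiff_zero.2 (ContinuousMap.continuous_postcomp f)
  | succ n ih =>
    intro E F _ _ _ _ f hf
    have hf' : ContDiff ℝ ∞ (fderiv ℝ f) := hf.fderiv_right (by simp)
    push_cast
    rw [contDiff_succ_iff_hasFDerivAt]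
    refine ⟨fun v => pointwiseApp K E F ((⟨fderiv ℝ f, hf'.continuous⟩ : C(E, E →L[ℝ] F)).comp v),
      ContDiff.comp (g := pointwiseApp K E F) (ContinuousLinearMap.contDiff (𝕜 := ℝ) (E := C(K, E →L[ℝ] F)) (F := C(K, E) →L[ℝ] C(K, F)) (pointwiseApp K E F)) (ih ⟨fderiv ℝ f, hf'.continuous⟩ hf'), fun v => ?_⟩
    exact hasFDerivAt_postcomp f _ (fun x => (hf.differentiable (by simp) x).hasFDerivAt) v

lemma contDiff_postcomp {E F : Type u} [NormedAddCommGroup E] [NormedSpace ℝ E]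
    [NormedAddCommGroup F] [NormedSpace ℝ F] (f : C(E, F)) (hf : ContDiff ℝ ∞ f) :
    ContDiff ℝ ∞ (fun v : C(K, E) => f.comp v) :=
  contDiff_infty.2 fun n => contDiff_postcomp_nat n f hf

end Nem

/-- The unit interval. -/
abbrev II := Set.Icc (0 : ℝ) 1

variable {E F G : Type} [NormedAddCommGroup E] [NormedSpace ℝ E]
    [NormedAddCommGroup F] [NormedSpace ℝ F] [NormedAddCommGroup G] [NormedSpace ℝ G]

/-- Superposition operator `u ↦ (t ↦ φ (t, u t))`. -/
def nem (φ : C(ℝ × E, F)) (u : C(II, E)) : C(II, F) :=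
  ⟨fun t => φ ((t : ℝ), u t), by fun_prop⟩

@[simp] lemma nem_apply (φ : C(ℝ × E, F)) (u : C(II, E)) (t : II) :
    nem φ u t = φ ((t : ℝ), u t) := rfl

lemma contDiff_nem (φ : C(ℝ × E, F)) (hφ : ContDiff ℝ ∞ φ) : ContDiff ℝ ∞ (nem φ) := by
  have h1 : ContDiff ℝ ∞ (fun u : C(II, E) =>
      (ContinuousLinearMap.inr ℝ ℝ E).compLeftContinuous ℝ II u +
        (⟨fun t => ((t : ℝ), 0), by fun_prop⟩ : C(II, ℝ × E))) :=
    (ContinuousLinearMap.contDiff _).add contDiff_const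
  have h2 := (contDiff_postcomp (K := II) φ hφ).comp h1
  convert h2 using 1
  ext u t
  simp [ContinuousLinearMap.compLeftContinuous]

/-- Constant functions. -/
def constL (E : Type) [NormedAddCommGroup E] [NormedSpace ℝ E] : E →L[ℝ] C(II, E) :=
  LinearMap.mkContinuous
    { toFun := fun x => ContinuousMap.const II x
      map_add' := by intros; ext; simp
      map_smul' := by intros; ext; simp } 1
    (by
      intro x
      rw [ContinuousMap.norm_le _ (by positivity)]
      intro t
      simp)

@[simp] lemma constL_apply (x : E) (t : II) : constL E x t = x := rfl

lemma norm_IccExtend_le (u : C(II, E)) (s : ℝ) : ‖Set.IccExtend zero_le_one u s‖ ≤ ‖u‖ :=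
  u.norm_coe_le_norm _

lemma cont_ext (u : C(II, E)) : Continuous (Set.IccExtend (zero_le_one' ℝ) u) :=
  u.continuous.Icc_extend'

/-- Indefinite integral. -/
def integL (E : Type) [NormedAddCommGroup E] [NormedSpace ℝ E] [CompleteSpace E] :
    C(II, E) →L[ℝ] C(II, E) :=
  LinearMap.mkContinuous
    { toFun := fun u => ⟨fun s => ∫ σ in (0 : ℝ)..s, Set.IccExtend (zero_le_one' ℝ) u σ, by
          have : Continuous fun s : ℝ => ∫ σ in (0 : ℝ)..s, Set.IccExtend (zero_le_one' ℝ) u σ :=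
            intervalIntegral.continuous_primitive
              (fun a b => (cont_ext u).intervalIntegrable a b) 0
          exact this.comp continuous_subtype_val⟩
      map_add' := by
        intro u v
        ext s
        exact intervalIntegral.integral_add ((cont_ext u).intervalIntegrable _ _)
          ((cont_ext v).intervalIntegrable _ _)
      map_smul' := by
        intro c u
        ext s
        exact intervalIntegral.integral_smul c _ } 1
    (by
      intro u
      rw [ContinuousMap.norm_le _ (by positivity)]
      intro s
      have := intervalIntegral.norm_integral_le_of_norm_le_const (a := (0 : ℝ)) (b := s)
        (f := Set.IccExtend (zero_le_one' ℝ) u) (C := ‖u‖) (fun x _ => norm_IccExtend_le u x)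
      refine this.trans ?_
      rw [sub_zero, abs_of_nonneg s.2.1, mul_comm]
      gcongr
      exact s.2.2)

lemma integL_apply [CompleteSpace E] (u : C(II, E)) (s : II) :
    integL E u s = ∫ σ in (0 : ℝ)..s, Set.IccExtend (zero_le_one' ℝ) u σ := rfl

/-- Evaluation at a point of the interval. -/
def evL (E : Type) [NormedAddCommGroup E] [NormedSpace ℝ E] (t : II) : C(II, E) →L[ℝ] E :=
  ContinuousMap.evalCLM ℝ t

@[simp] lemma evL_apply (u : C(II, E)) (t : II) : evL E t u = u t := rfl

/-- Parametrized Hadamard lemma. -/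
lemma hadamard [CompleteSpace F] (f : E × G → F) (hf : ContDiff ℝ ∞ f)
    (h0 : ∀ x, f (x, 0) = 0) :
    ∃ g : E × G → (G →L[ℝ] F), ContDiff ℝ ∞ g ∧ (∀ x v, f (x, v) = g (x, v) v) ∧
      ∀ x, g (x, 0) = (fderiv ℝ f (x, 0)).comp (ContinuousLinearMap.inr ℝ E G) := by
  have hf' : ContDiff ℝ ∞ (fderiv ℝ f) := hf.fderiv_right (by simp)
  have hφ : ContDiff ℝ ∞ (fun z : ℝ × (E × G) =>
      (fderiv ℝ f (z.2.1, z.1 • z.2.2)).comp (ContinuousLinearMap.inr ℝ E G)) := by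
    have : ContDiff ℝ ∞ (fun z : ℝ × (E × G) => fderiv ℝ f (z.2.1, z.1 • z.2.2)) :=
      hf'.comp (by fun_prop)
    exact this.clm_comp contDiff_const
  let φ : C(ℝ × (E × G), G →L[ℝ] F) := ⟨_, hφ.continuous⟩
  have hev : ∀ z : E × G, evL _ ⟨1, by simp⟩ (integL _ (nem φ (constL _ z))) =
      ∫ τ in (0 : ℝ)..1, (fderiv ℝ f (z.1, τ • z.2)).comp (ContinuousLinearMap.inr ℝ E G) := by
    intro z
    rw [evL_apply, integL_apply]
    apply intervalIntegral.integral_congr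
    intro τ hτ
    rw [Set.uIcc_of_le zero_le_one] at hτ
    simp only [Set.IccExtend_of_mem _ _ hτ]
    rfl
  refine ⟨fun z => evL _ ⟨1, by simp⟩ (integL _ (nem φ (constL _ z))), ?_, ?_, ?_⟩
  · exact (evL _ _).contDiff.comp ((integL _).contDiff.comp
      ((contDiff_nem φ hφ).comp (constL _).contDiff))
  · intro x v
    simp only [hev]
    have hc : Continuous fun τ : ℝ =>
        (fderiv ℝ f (x, τ • v)).comp (ContinuousLinearMap.inr ℝ E G) :=
      hφ.continuous.comp (f := fun τ : ℝ => (τ, (x, v))) (by fun_prop)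
    rw [ContinuousLinearMap.intervalIntegral_apply (hc.intervalIntegrable _ _)]
    have hd : ∀ τ ∈ Set.uIcc (0 : ℝ) 1, HasDerivAt (fun τ : ℝ => f (x, τ • v))
        (((fderiv ℝ f (x, τ • v)).comp (ContinuousLinearMap.inr ℝ E G)) v) τ := by
      intro τ _
      have h1 : HasDerivAt (fun τ : ℝ => (x, τ • v)) ((0 : E), v) τ := by
        have := (hasDerivAt_id τ).smul_const v
        simpa using (hasDerivAt_const τ x).prodMk this
      exact ((hf.differentiable (by simp) (x, τ • v)).hasFDerivAt).comp_hasDerivAt τ h1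
    rw [intervalIntegral.integral_eq_sub_of_hasDerivAt hd
      ((hc.clm_apply continuous_const).intervalIntegrable _ _)]
    simp [h0]
  · intro x
    simp only [hev, smul_zero]
    simp

lemma ift [CompleteSpace E] (f : E → F) {O : Set E} (hO : IsOpen O) {a : E} (ha : a ∈ O)
    (hf : ContDiffOn ℝ ∞ f O) (f' : E ≃L[ℝ] F) (hf' : HasFDerivAt f (f' : E →L[ℝ] F) a) :
    ∃ (e : OpenPartialHomeomorph E F) (r : ℝ), 0 < r ∧ e.source = Metric.ball a r ∧
      e.source ⊆ O ∧ (∀ x, e x = f x) ∧ ContDiffOn ℝ ∞ e.symm e.target ∧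
      HasFDerivAt e.symm (f'.symm : F →L[ℝ] E) (f a) := by
  have hfa : ContDiffAt ℝ ∞ f a := hf.contDiffAt (hO.mem_nhds ha)
  let e₀ := hfa.toOpenPartialHomeomorph f hf' (by simp)
  have he₀ : ∀ x, e₀ x = f x := fun x => rfl
  have ha₀ : a ∈ e₀.source := hfa.mem_toOpenPartialHomeomorph_source hf' (by simp)
  have hO2 : IsOpen (O ∩ fderiv ℝ f ⁻¹' (Set.range ((↑) : (E ≃L[ℝ] F) → E →L[ℝ] F))) :=
    (hf.continuousOn_fderiv_of_isOpen hO (by simp)).isOpen_inter_preimage hO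
      ContinuousLinearEquiv.isOpen
  have hmem : a ∈ (O ∩ fderiv ℝ f ⁻¹' (Set.range ((↑) : (E ≃L[ℝ] F) → E →L[ℝ] F))) ∩ e₀.source :=
    ⟨⟨ha, ⟨f', hf'.fderiv.symm⟩⟩, ha₀⟩
  obtain ⟨r, hr, hball⟩ := Metric.isOpen_iff.1 (hO2.inter e₀.open_source) a hmem
  have hsrc : (e₀.restrOpen (Metric.ball a r) Metric.isOpen_ball).source = Metric.ball a r := by
    rw [OpenPartialHomeomorph.restrOpen_source]
    exact Set.inter_eq_right.2 fun x hx => (hball hx).2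
  set e := e₀.restrOpen (Metric.ball a r) Metric.isOpen_ball with he
  have hef : ∀ x, e x = f x := fun x => rfl
  have hea : e.symm (f a) = a := by
    rw [← hef a]; exact e.left_inv (by rw [hsrc]; exact Metric.mem_ball_self hr)
  refine ⟨e, r, hr, hsrc, ?_, hef, ?_, ?_⟩
  · rw [hsrc]; exact fun x hx => (hball hx).1.1
  · intro y hy
    have hx : e.symm y ∈ Metric.ball a r := hsrc ▸ e.map_target hy
    obtain ⟨⟨hxO, ⟨g, hg⟩⟩, -⟩ := hball hx
    have hc : ContDiffAt ℝ ∞ f (e.symm y) := hf.contDiffAt (hO.mem_nhds hxO)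
    refine (e.contDiffAt_symm (f₀' := g) hy ?_ hc).contDiffWithinAt
    rw [hg]
    exact (hc.differentiableAt (by simp)).hasFDerivAt
  · have hy : f a ∈ e.target := by
      rw [← hef a]; exact e.map_source (by rw [hsrc]; exact Metric.mem_ball_self hr)
    refine e.hasFDerivAt_symm hy ?_
    rw [hea]; exact hf'

section Ode

variable [CompleteSpace E]

/-- `(x, u) ↦ (t ↦ (x, u t))`. -/
def pairL (E : Type) [NormedAddCommGroup E] [NormedSpace ℝ E] :
    (E × C(II, E)) →L[ℝ] C(II, E × E) :=
  ((ContinuousLinearMap.inl ℝ E E).compLeftContinuous ℝ II).comp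
      ((constL E).comp (ContinuousLinearMap.fst ℝ E C(II, E))) +
    ((ContinuousLinearMap.inr ℝ E E).compLeftContinuous ℝ II).comp
      (ContinuousLinearMap.snd ℝ E C(II, E))

@[simp] lemma pairL_apply (z : E × C(II, E)) (t : II) : pairL E z t = (z.1, z.2 t) := by
  simp [pairL, ContinuousLinearMap.compLeftContinuous]

/-- The integrand. -/
def rhs (ψ : C(ℝ × (E × E), E →L[ℝ] E)) (z : E × C(II, E)) : C(II, E) :=
  pointwiseApp II E E (nem ψ (pairL E z)) z.2

@[simp] lemma rhs_apply (ψ : C(ℝ × (E × E), E →L[ℝ] E)) (z : E × C(II, E)) (t : II) :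
    rhs ψ z t = ψ ((t : ℝ), (z.1, z.2 t)) (z.2 t) := by
  simp [rhs]

lemma contDiff_aux (ψ : C(ℝ × (E × E), E →L[ℝ] E)) (hψ : ContDiff ℝ ∞ ψ) :
    ContDiff ℝ ∞ (fun z : E × C(II, E) => pointwiseApp II E E (nem ψ (pairL E z))) := by
  have h1 : ContDiff ℝ ∞ (fun z : E × C(II, E) =>
      nem (E := E × E) (F := E →L[ℝ] E) ψ (pairL E z)) :=
    ContDiff.comp (g := nem (E := E × E) (F := E →L[ℝ] E) ψ)
      (contDiff_nem (E := E × E) (F := E →L[ℝ] E) ψ hψ) (pairL E).contDiff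
  exact ContDiff.comp (g := pointwiseApp II E E)
      (ContinuousLinearMap.contDiff (𝕜 := ℝ) (E := C(II, E →L[ℝ] E))
        (F := C(II, E) →L[ℝ] C(II, E)) (pointwiseApp II E E)) h1

lemma contDiff_rhs (ψ : C(ℝ × (E × E), E →L[ℝ] E)) (hψ : ContDiff ℝ ∞ ψ) :
    ContDiff ℝ ∞ (rhs ψ) :=
  (contDiff_aux ψ hψ).clm_apply (contDiff_snd (𝕜 := ℝ) (E := E) (F := C(II, E)))

lemma hasFDerivAt_rhs (ψ : C(ℝ × (E × E), E →L[ℝ] E)) (hψ : ContDiff ℝ ∞ ψ)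
    (hψ0 : ∀ s x, ψ (s, (x, 0)) = 0) (x : E) :
    HasFDerivAt (rhs ψ) (0 : (E × C(II, E)) →L[ℝ] C(II, E)) (x, 0) := by
  have h5 := (((contDiff_aux ψ hψ).differentiable (by simp) (x, 0)).hasFDerivAt).clm_apply
    (hasFDerivAt_snd (𝕜 := ℝ) (E := E) (F := C(II, E)) (p := (x, 0)))
  refine HasFDerivAt.congr_fderiv (f := rhs ψ) h5 ?_
  refine ContinuousLinearMap.ext fun z => ?_
  ext t
  simp [hψ0]

theorem ode_main (B : E × E → (E →L[ℝ] E →L[ℝ] E)) (hB : ContDiff ℝ ∞ B) (x₀ : E) :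
    ∃ (g : E × E → E) (O : Set (E × E)), IsOpen O ∧ (x₀, 0) ∈ O ∧ ContDiffOn ℝ ∞ g O ∧
      (∀ x w, (x, w) ∈ O → g (x, 0) = 0) ∧
      HasFDerivAt g (ContinuousLinearMap.snd ℝ E E) (x₀, 0) ∧
      ∀ x w, (x, w) ∈ O →
        fderiv ℝ g (x, w) (0, w) = g (x, w) + B (x, g (x, w)) (g (x, w)) (g (x, w)) := by
  have hψ : ContDiff ℝ ∞ (fun z : ℝ × (E × E) => B (z.2.1, z.1 • z.2.2) z.2.2) := by
    have : ContDiff ℝ ∞ (fun z : ℝ × (E × E) => B (z.2.1, z.1 • z.2.2)) := hB.comp (by fun_prop)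
    exact this.clm_apply (by fun_prop)
  let ψ : C(ℝ × (E × E), E →L[ℝ] E) := ⟨_, hψ.continuous⟩
  have hψa : ∀ s x v, ψ (s, (x, v)) = B (x, s • v) v := fun _ _ _ => rfl
  have hψ0 : ∀ s x, ψ (s, (x, 0)) = 0 := fun s x => by rw [hψa, map_zero]
  let Φ : E × E × C(II, E) → E × E × C(II, E) := fun z =>
    (z.1, z.2.1, z.2.2 - constL E z.2.1 - integL E (rhs ψ (z.1, z.2.2)))
  have hΦ : ContDiff ℝ ∞ Φ := by
    have h1 : ContDiff ℝ ∞ (fun z : E × E × C(II, E) => rhs ψ (z.1, z.2.2)) :=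
      (contDiff_rhs ψ hψ).comp (by fun_prop)
    have h2 : ContDiff ℝ ∞ (fun z : E × E × C(II, E) => integL E (rhs ψ (z.1, z.2.2))) :=
      (integL E).contDiff.comp h1
    have h3 : ContDiff ℝ ∞ (fun z : E × E × C(II, E) => constL E z.2.1) :=
      (constL E).contDiff.comp (by fun_prop)
    have h4 : ContDiff ℝ ∞ (fun z : E × E × C(II, E) => z.2.2) := by fun_prop
    exact contDiff_fst.prodMk ((contDiff_fst.comp contDiff_snd).prodMk ((h4.sub h3).sub h2))
  let p1 := ContinuousLinearMap.fst ℝ E (E × C(II, E))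
  let p2 := (ContinuousLinearMap.fst ℝ E C(II, E)).comp
    (ContinuousLinearMap.snd ℝ E (E × C(II, E)))
  let p3 := (ContinuousLinearMap.snd ℝ E C(II, E)).comp
    (ContinuousLinearMap.snd ℝ E (E × C(II, E)))
  let L : (E × E × C(II, E)) ≃L[ℝ] (E × E × C(II, E)) :=
    ContinuousLinearEquiv.equivOfInverse
      (p1.prod (p2.prod (p3 - (constL E).comp p2)))
      (p1.prod (p2.prod (p3 + (constL E).comp p2)))
      (fun z => by simp [p1, p2, p3]) (fun z => by simp [p1, p2, p3])
  have hΦ' : HasFDerivAt Φ (L : (E × E × C(II, E)) →L[ℝ] (E × E × C(II, E))) (x₀, 0, 0) := by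
    have h1 : HasFDerivAt (fun z : E × E × C(II, E) => rhs ψ (z.1, z.2.2))
        ((0 : (E × C(II, E)) →L[ℝ] C(II, E)).comp (p1.prod p3)) (x₀, 0, 0) :=
      HasFDerivAt.comp (g := rhs ψ) (x₀, (0 : E), (0 : C(II, E)))
        (f := fun z : E × E × C(II, E) => (z.1, z.2.2)) (hasFDerivAt_rhs ψ hψ hψ0 x₀)
        (p1.prod p3).hasFDerivAt
    have h2 := (integL E).hasFDerivAt.comp _ h1
    have h3 : HasFDerivAt (fun z : E × E × C(II, E) => constL E z.2.1)
      ((constL E).comp p2) (x₀, 0, 0) := ((constL E).comp p2).hasFDerivAt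
    have h4 := p1.hasFDerivAt.prodMk ((p2.hasFDerivAt (x := (x₀, 0, 0))).prodMk
      ((p3.hasFDerivAt.sub h3).sub h2))
    refine HasFDerivAt.congr_fderiv (f := Φ) h4 ?_
    refine ContinuousLinearMap.ext fun z => ?_
    simp [L]
  obtain ⟨e, r, hr, hsrc, -, heΦ, hsm, hder⟩ := ift Φ isOpen_univ (Set.mem_univ _)
    hΦ.contDiffOn L hΦ'
  have hrhs0 : ∀ x, rhs ψ (x, 0) = 0 := by intro x; ext t; simp
  have hΦ0 : ∀ x, Φ (x, 0, 0) = (x, 0, 0) := by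
    intro x; simp [Φ, hrhs0]
  rw [hΦ0] at hder
  -- the embedding (x,w) ↦ (x,w,0)
  let ι : E × E →L[ℝ] E × E × C(II, E) :=
    (ContinuousLinearMap.fst ℝ E E).prod ((ContinuousLinearMap.snd ℝ E E).prod 0)
  have hι : ∀ x w, ι (x, w) = (x, w, 0) := fun _ _ => rfl
  let uu : E × E → C(II, E) := fun q => (e.symm (ι q)).2.2
  let one : II := ⟨1, by simp⟩
  -- uniqueness
  have huniq : ∀ x w (u : C(II, E)), (x, w, u) ∈ Metric.ball (x₀, (0 : E), (0 : C(II, E))) r →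
      u = constL E w + integL E (rhs ψ (x, u)) → ι (x, w) ∈ e.target ∧ uu (x, w) = u := by
    intro x w u hb hu
    have h1 : e (x, w, u) = ι (x, w) := by
      rw [heΦ, hι]
      simp only [Φ]
      congr 2
      rw [sub_sub, sub_eq_zero]; exact hu
    have hs : (x, w, u) ∈ e.source := hsrc ▸ hb
    refine ⟨h1 ▸ e.map_source hs, ?_⟩
    simp only [uu]
    rw [← h1, e.left_inv hs]
  have hexist : ∀ x w, ι (x, w) ∈ e.target →
      (x, w, uu (x, w)) ∈ Metric.ball (x₀, (0 : E), (0 : C(II, E))) r ∧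
      uu (x, w) = constL E w + integL E (rhs ψ (x, uu (x, w))) := by
    intro x w h
    have h1 := e.map_target h
    have h2 := e.right_inv h
    rw [heΦ, hι] at h2
    rw [hsrc, hι] at h1
    have e1 : (e.symm (x, w, 0)).1 = x := congrArg Prod.fst h2
    have e2 : (e.symm (x, w, 0)).2.1 = w := congrArg (fun z => z.2.1) h2
    have e3 : (e.symm (x, w, 0)).2.2 - constL E (e.symm (x, w, 0)).2.1 -
      integL E (rhs ψ ((e.symm (x, w, 0)).1, (e.symm (x, w, 0)).2.2)) = 0 :=
      congrArg (fun z => z.2.2) h2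
    rw [e1, e2, sub_sub, sub_eq_zero] at e3
    refine ⟨?_, e3⟩
    convert h1 using 1
    exact Prod.ext e1.symm (Prod.ext e2.symm rfl)
  have hball : ∀ x w (u : C(II, E)), (x, w, u) ∈ Metric.ball (x₀, (0 : E), (0 : C(II, E))) r ↔
      dist x x₀ < r ∧ ‖w‖ < r ∧ ‖u‖ < r := by
    intro x w u
    simp [Metric.mem_ball, Prod.dist_eq]
  have hOopen : IsOpen (ι ⁻¹' e.target) := e.open_target.preimage ι.continuous
  have hgsm : ContDiffOn ℝ ∞ (fun q => uu q one) (ι ⁻¹' e.target) := by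
    have h1 : ContDiffOn ℝ ∞ (fun q => e.symm (ι q)) (ι ⁻¹' e.target) :=
      hsm.comp ι.contDiff.contDiffOn (fun _ h => h)
    exact (((evL E one).comp p3).contDiff).comp_contDiffOn h1
  refine ⟨fun q => uu q one, ι ⁻¹' e.target, hOopen, ?_, hgsm, ?_, ?_, ?_⟩
  · refine (huniq x₀ 0 0 (Metric.mem_ball_self hr) ?_).1
    simp [hrhs0]
  · intro x w h
    have h1 := (hball _ _ _).1 (hexist x w h).1
    have := (huniq x 0 0 ((hball _ _ _).2 ⟨h1.1, by simpa using hr, by simpa using hr⟩)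
      (by simp [hrhs0])).2
    simp [this]
  · have h1 : HasFDerivAt (fun q => e.symm (ι q)) _ (x₀, 0) :=
      HasFDerivAt.comp (x₀, (0 : E)) (g := e.symm) (f := ι) hder ι.hasFDerivAt
    have h2 := (((evL E one).comp p3).hasFDerivAt).comp _ h1
    refine HasFDerivAt.congr_fderiv (f := fun q => uu q one) h2 ?_
    refine ContinuousLinearMap.ext fun z => ?_
    simp [L, p1, p2, p3, ι]
  · intro x w h
    obtain ⟨hb, hu⟩ := hexist x w h
    set u := uu (x, w) with hu_def
    have hb' := (hball _ _ _).1 hb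
    -- extended functions
    have hpt : ∀ s : II, u s = w + ∫ σ in (0 : ℝ)..s,
        Set.IccExtend (zero_le_one' ℝ) (rhs ψ (x, u)) σ := by
      intro s
      conv_lhs => rw [hu]
      simp [integL_apply]
    have hscale : ∀ l : II, ι (x, (l : ℝ) • w) ∈ e.target ∧
        uu (x, (l : ℝ) • w) one = (l : ℝ) • u l := by
      intro l
      have hmul : ∀ s : II, (l : ℝ) * s ∈ II := fun s =>
        ⟨mul_nonneg l.2.1 s.2.1, mul_le_one₀ l.2.2 s.2.1 s.2.2⟩
      let ut : C(II, E) := ⟨fun s => (l : ℝ) • u ⟨(l : ℝ) * s, hmul s⟩, by fun_prop⟩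
      have hl1 : ‖(l : ℝ)‖ ≤ 1 := by rw [Real.norm_of_nonneg l.2.1]; exact l.2.2
      have := huniq x ((l : ℝ) • w) ut ((hball _ _ _).2 ⟨hb'.1, ?_, ?_⟩) ?_
      · refine ⟨this.1, ?_⟩
        rw [this.2]
        simp only [ut, one, ContinuousMap.coe_mk, mul_one]
      · rw [norm_smul]
        exact (mul_le_of_le_one_left (norm_nonneg _) hl1).trans_lt hb'.2.1
      · refine lt_of_le_of_lt ?_ hb'.2.2
        rw [ContinuousMap.norm_le _ (by positivity)]
        intro s
        simp only [ut, ContinuousMap.coe_mk, norm_smul]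
        exact (mul_le_of_le_one_left (norm_nonneg _) hl1).trans (u.norm_coe_le_norm _)
      · ext s
        simp only [ut, ContinuousMap.coe_mk, ContinuousMap.add_apply, constL_apply, integL_apply]
        rw [hpt ⟨(l : ℝ) * s, hmul s⟩, smul_add]
        congr 1
        have hc := intervalIntegral.smul_integral_comp_mul_left (a := 0) (b := (s : ℝ))
          (Set.IccExtend (zero_le_one' ℝ) (rhs ψ (x, u))) (l : ℝ)
        rw [mul_zero] at hc
        simp only
        rw [← hc, ← intervalIntegral.integral_smul, ← intervalIntegral.integral_smul]
        apply intervalIntegral.integral_congr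
        intro σ hσ
        rw [Set.uIcc_of_le s.2.1] at hσ
        have hσ' : σ ∈ II := ⟨hσ.1, hσ.2.trans s.2.2⟩
        simp only [Set.IccExtend_of_mem _ _ hσ', Set.IccExtend_of_mem _ _ (hmul ⟨σ, hσ'⟩),
          rhs_apply, hψa]
        simp only [ContinuousMap.coe_mk, map_smul, smul_apply, smul_smul]
        simp [mul_comm]
    have hD : HasFDerivAt (fun q => uu q one) (fderiv ℝ (fun q => uu q one) (x, w)) (x, w) :=
      ((hgsm.contDiffAt (hOopen.mem_nhds h)).differentiableAt (by simp)).hasFDerivAt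
    have hline : HasDerivAt (fun l : ℝ => (x, l • w)) ((0 : E), w) 1 := by
      have := (hasDerivAt_id (1 : ℝ)).smul_const w
      simpa using (hasDerivAt_const (1 : ℝ) x).prodMk this
    have hd1 : HasDerivAt (fun l : ℝ => uu (x, l • w) one)
        (fderiv ℝ (fun q => uu q one) (x, w) (0, w)) 1 := by
      have h2 : HasFDerivAt (fun q => uu q one) (fderiv ℝ (fun q => uu q one) (x, w))
        ((fun l : ℝ => (x, l • w)) 1) := by simpa using hD
      exact h2.comp_hasDerivAt 1 hline
    have hintD : HasDerivAt (fun l : ℝ => w + ∫ σ in (0 : ℝ)..l,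
        Set.IccExtend (zero_le_one' ℝ) (rhs ψ (x, u)) σ)
        (Set.IccExtend (zero_le_one' ℝ) (rhs ψ (x, u)) 1) 1 :=
      ((cont_ext (rhs ψ (x, u))).integral_hasStrictDerivAt 0 1).hasDerivAt.const_add w
    have hd2 := (hasDerivAt_id (1 : ℝ)).smul hintD
    have hd3 : HasDerivWithinAt (fun l : ℝ => uu (x, l • w) one) _ II 1 :=
      hd2.hasDerivWithinAt.congr_of_mem (by
        intro l hl
        rw [(hscale ⟨l, hl⟩).2, hpt ⟨l, hl⟩]
        rfl) one.2
    have := (uniqueDiffOn_Icc (zero_lt_one' ℝ) 1 one.2).eq_deriv _ hd1.hasDerivWithinAt hd3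
    rw [this]
    have h1 := hpt one
    simp only [one] at h1
    simp only [id, one_smul, ← h1]
    rw [Set.IccExtend_of_mem _ _ one.2, rhs_apply, hψa]
    simp [one, add_comm]
    rfl

end Ode

end EulerNF

namespace EulerNF

open scoped ContDiff

/-- The nonlinear remainder of the vector field. -/
def rem {d : ℕ} (X : Pt d → Pt d) (q : Pt d) : EuclideanSpace ℝ (Fin d) :=
  (X q).2 - (q.2 - q.1)

lemma rem_contDiffOn {d : ℕ} {X : Pt d → Pt d} {U : Set (Pt d)} (hX : IsEulerVF X U) :
    ContDiffOn ℝ ∞ (rem X) U :=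
  (contDiff_snd.comp_contDiffOn hX.smooth).sub
    (ContDiff.contDiffOn (by fun_prop))

lemma rem_jet {d : ℕ} {X : Pt d → Pt d} {U : Set (Pt d)} (hU : IsOpen U)
    (hX : IsEulerVF X U) (q : Pt d) (hq : q ∈ Diag d ∩ U) :
    rem X q = 0 ∧ HasFDerivAt (rem X) (0 : Pt d →L[ℝ] EuclideanSpace ℝ (Fin d)) q := by
  have hdiff : DifferentiableAt ℝ (rem X) q :=
    ((rem_contDiffOn hX).contDiffAt (hU.mem_nhds hq.2)).differentiableAt (by simp)
  have key : ∀ i : Fin d, rem X q i = 0 ∧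
      fderiv ℝ (fun q' => rem X q' i) q = 0 := by
    intro i
    let l : Pt d →L[ℝ] ℝ := (EuclideanSpace.proj i).comp
      (ContinuousLinearMap.snd ℝ _ _ - ContinuousLinearMap.fst ℝ _ _)
    have hl : ∀ q', l q' = q'.2 i - q'.1 i := by intro q'; simp [l]
    have hE := hX.euler l l.contDiff.contDiffOn (by
      intro p hp
      have : p.1 = p.2 := hp.1
      rw [hl, this, sub_self])
    have heq : ∀ q' ∈ U, (fun q => vfApply X l q - l q) q' = rem X q' i := by
      intro q' hq'
      simp only [vfApply, ContinuousLinearMap.fderiv, hl, hX.fiber q' hq', rem]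
      simp
    have h0 := hE 0 (by norm_num) q hq
    have h1 := hE 1 (by norm_num) q hq
    constructor
    · rw [← heq q hq.2]
      have := norm_iteratedFDeriv_zero (𝕜 := ℝ) (f := fun q => vfApply X l q - l q) (x := q)
      rw [h0, norm_zero] at this
      exact norm_eq_zero.1 this.symm
    · have := norm_iteratedFDeriv_one (𝕜 := ℝ) (fun q => vfApply X l q - l q) (x := q)
      rw [h1, norm_zero] at this
      have h2 := norm_eq_zero.1 this.symm
      rw [← h2]
      apply Filter.EventuallyEq.fderiv_eq
      filter_upwards [hU.mem_nhds hq.2] with q' hq'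
      exact (heq q' hq').symm
  constructor
  · ext i; simpa using (key i).1
  · have h0 : fderiv ℝ (rem X) q = 0 := by
      refine ContinuousLinearMap.ext fun v => ?_
      ext i
      have h1 : HasFDerivAt (fun q' => rem X q' i)
          ((EuclideanSpace.proj (𝕜 := ℝ) i).comp (fderiv ℝ (rem X) q)) q :=
        (EuclideanSpace.proj (𝕜 := ℝ) i : EuclideanSpace ℝ (Fin d) →L[ℝ] ℝ).hasFDerivAt.comp q
          hdiff.hasFDerivAt
      have h2 := h1.fderiv
      rw [(key i).2] at h2
      have h3 := congrArg (fun L => L v) h2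
      simpa using h3.symm
    rw [← h0]; exact hdiff.hasFDerivAt

/-- Cut-off factorization of the remainder. -/
lemma exists_B {d : ℕ} {X : Pt d → Pt d} {U : Set (Pt d)} (hU : IsOpen U)
    (hX : IsEulerVF X U) (p : Pt d) (hp : p ∈ U) :
    ∃ (ρ : ℝ) (B : Pt d → (EuclideanSpace ℝ (Fin d) →L[ℝ] EuclideanSpace ℝ (Fin d) →L[ℝ]
        EuclideanSpace ℝ (Fin d))), 0 < ρ ∧ Metric.ball p ρ ⊆ U ∧ ContDiff ℝ ∞ B ∧
      ∀ x v, (x, x + v) ∈ Metric.ball p ρ → rem X (x, x + v) = B (x, v) v v := by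
  obtain ⟨ε, hε, hball⟩ := Metric.isOpen_iff.1 hU p hp
  let χ : ContDiffBump p := ⟨ε / 4, ε / 2, by positivity, by linarith⟩
  have hts : tsupport χ ⊆ U := by
    rw [χ.tsupport_eq]
    exact (Metric.closedBall_subset_ball (by simp only [χ]; linarith)).trans hball
  let R₁ : Pt d → EuclideanSpace ℝ (Fin d) := fun q => χ q • rem X q
  have hχ : ContDiff ℝ ∞ χ := χ.contDiff
  have hR₁ : ContDiff ℝ ∞ R₁ := by
    refine contDiff_iff_contDiffAt.2 fun q => ?_
    by_cases hqU : q ∈ U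
    · exact hχ.contDiffAt.smul ((rem_contDiffOn hX).contDiffAt (hU.mem_nhds hqU))
    · have hx' : q ∉ tsupport χ := fun h => hqU (hts h)
      have h3 := notMem_tsupport_iff_eventuallyEq.1 hx'
      have h4 : R₁ =ᶠ[nhds q] fun _ => 0 := by
        filter_upwards [h3] with q hq
        simp [R₁, hq]
      exact contDiffAt_const.congr_of_eventuallyEq h4
  have hjet : ∀ x, R₁ (x, x) = 0 ∧ fderiv ℝ R₁ (x, x) = 0 := by
    intro x
    by_cases hx : (x, x) ∈ U
    · obtain ⟨h0, h1⟩ := rem_jet hU hX (x, x) ⟨rfl, hx⟩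
      refine ⟨by simp [R₁, h0], ?_⟩
      have h2 := (hχ.differentiable (by simp) (x, x)).hasFDerivAt.smul h1
      refine (HasFDerivAt.fderiv (f := R₁) h2).trans ?_
      refine ContinuousLinearMap.ext fun v => ?_
      simp [h0]
    · have hx' : (x, x) ∉ tsupport χ := fun h => hx (hts h)
      have h3 := notMem_tsupport_iff_eventuallyEq.1 hx'
      have h4 : R₁ =ᶠ[nhds (x, x)] fun _ => 0 := by
        filter_upwards [h3] with q hq
        simp [R₁, hq]
      refine ⟨h4.eq_of_nhds, ?_⟩
      rw [h4.fderiv_eq]; simp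
  let A : Pt d →L[ℝ] Pt d := (ContinuousLinearMap.fst ℝ _ _).prod
    (ContinuousLinearMap.fst ℝ _ _ + ContinuousLinearMap.snd ℝ _ _)
  have hA : ∀ x v, A (x, v) = (x, x + v) := fun _ _ => rfl
  have hR : ContDiff ℝ ∞ (fun z => R₁ (A z)) := hR₁.comp A.contDiff
  obtain ⟨g₁, hg₁, hg₁R, hg₁0⟩ := hadamard (fun z => R₁ (A z)) hR (by
    intro x; simp only [hA, add_zero]; exact (hjet x).1)
  have hg₁z : ∀ x, g₁ (x, 0) = 0 := by
    intro x
    rw [hg₁0]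
    have : HasFDerivAt (fun z => R₁ (A z)) ((fderiv ℝ R₁ (A (x, 0))).comp A) (x, 0) :=
      (hR₁.differentiable (by simp) _).hasFDerivAt.comp _ A.hasFDerivAt
    rw [this.fderiv, hA, add_zero, (hjet x).2]
    simp
  obtain ⟨g₂, hg₂, hg₂R, -⟩ := hadamard g₁ hg₁ hg₁z
  refine ⟨ε / 4, g₂, by positivity,
    (Metric.ball_subset_ball (by linarith)).trans hball, hg₂, ?_⟩
  intro x v hxv
  have h1 : χ (x, x + v) = 1 := χ.one_of_mem_closedBall (Metric.ball_subset_closedBall hxv)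
  have h2 := hg₁R x v
  simp only [hA, R₁, h1, one_smul] at h2
  rw [h2, hg₂R]

end EulerNF

/-- normal form for Euler vector fields, Proposition 2.5: if `X` is an
Euler vector field on an open set `U ⊆ ℝ^d × ℝ^d` and `p ∈ Δ ∩ U`, there exist an open
set `V` with `p ∈ V ⊆ U` and a smooth map `htil : V → ℝ^d` such that (i) `Ψ(x₁,x₂) =
(x₁, htil(x₁,x₂))` is a smooth diffeomorphism of `V` onto an open set, (ii) `Δ ∩ V = {htil = 0}`,
and (iii) `X htil = htil` on `V`, i.e. `D htil(q)(X(q)) = htil(q)`. -/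
theorem euler_normal_form {d : ℕ} {X : Pt d → Pt d} {U : Set (Pt d)}
    (hU : IsOpen U) (hX : IsEulerVF X U) (p : Pt d) (hp : p ∈ Diag d ∩ U) :
    ∃ (V : Set (Pt d)) (htil : Pt d → EuclideanSpace ℝ (Fin d)),
      IsOpen V ∧ p ∈ V ∧ V ⊆ U ∧
      ContDiffOn ℝ (⊤ : ℕ∞) htil V ∧
      Set.InjOn (fun q : Pt d => (q.1, htil q)) V ∧
      IsOpen ((fun q : Pt d => (q.1, htil q)) '' V) ∧
      (∃ Ψinv : Pt d → Pt d,
        ContDiffOn ℝ (⊤ : ℕ∞) Ψinv ((fun q : Pt d => (q.1, htil q)) '' V) ∧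
        ∀ q ∈ V, Ψinv (q.1, htil q) = q) ∧
      (∀ q ∈ V, (q ∈ Diag d ↔ htil q = 0)) ∧
      (∀ q ∈ V, fderiv ℝ htil q (X q) = htil q) := by
  classical
  obtain ⟨x₀, y₀⟩ := p
  obtain rfl : x₀ = y₀ := hp.1
  obtain ⟨ρ, B, hρ, hρU, hB, hBrem⟩ := EulerNF.exists_B hU hX (x₀, x₀) hp.2
  obtain ⟨g, O, hO, hx₀O, hg, hg0, hgd, hode⟩ := EulerNF.ode_main B hB x₀
  let Γ : Pt d → Pt d := fun z => (z.1, z.1 + g z)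
  have hΓ : ContDiffOn ℝ (⊤ : ℕ∞) Γ O :=
    contDiff_fst.contDiffOn.prodMk (contDiff_fst.contDiffOn.add hg)
  have hΓ0 : Γ (x₀, 0) = (x₀, x₀) := by simp [Γ, hg0 x₀ 0 hx₀O]
  let F1 := ContinuousLinearMap.fst ℝ (EuclideanSpace ℝ (Fin d)) (EuclideanSpace ℝ (Fin d))
  let F2 := ContinuousLinearMap.snd ℝ (EuclideanSpace ℝ (Fin d)) (EuclideanSpace ℝ (Fin d))
  let L : Pt d ≃L[ℝ] Pt d := ContinuousLinearEquiv.equivOfInverse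
    (F1.prod (F1 + F2)) (F1.prod (F2 - F1))
    (fun z => by simp [F1, F2]) (fun z => by simp [F1, F2])
  have hΓd : ∀ z D, HasFDerivAt g D z → HasFDerivAt Γ (F1.prod (F1 + D)) z := fun z D hD =>
    F1.hasFDerivAt.prodMk (F1.hasFDerivAt.add hD)
  have hO' : IsOpen (O ∩ Γ ⁻¹' Metric.ball (x₀, x₀) ρ) :=
    hΓ.continuousOn.isOpen_inter_preimage hO Metric.isOpen_ball
  obtain ⟨e, r, hr, hsrc, hsub, heΓ, hsm, -⟩ := EulerNF.ift Γ hO' (a := (x₀, 0))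
    ⟨hx₀O, by rw [Set.mem_preimage, hΓ0]; exact Metric.mem_ball_self hρ⟩
    (hΓ.mono Set.inter_subset_left) L (hΓd _ _ hgd)
  have hfst : ∀ q ∈ e.target, (e.symm q).1 = q.1 := by
    intro q hq
    have := e.right_inv hq
    rw [heΓ] at this
    have h : (Γ (e.symm q)).1 = q.1 := by rw [this]
    exact h
  have hΨ : ∀ q ∈ e.target, (q.1, (e.symm q).2) = e.symm q := by
    intro q hq
    exact Prod.ext (hfst q hq).symm rfl
  have himg : (fun q : Pt d => (q.1, (e.symm q).2)) '' e.target = e.source := by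
    rw [Set.image_congr hΨ]
    exact e.symm_image_target_eq_source
  refine ⟨e.target, fun q => (e.symm q).2, e.open_target, ?_, ?_, ?_, ?_, ?_, ?_, ?_, ?_⟩
  · rw [← hΓ0, ← heΓ]
    exact e.map_source (by rw [hsrc]; exact Metric.mem_ball_self hr)
  · intro q hq
    have h1 := (hsub (e.map_target hq)).2
    rw [Set.mem_preimage, ← heΓ, e.right_inv hq] at h1
    exact hρU h1
  · exact contDiff_snd.comp_contDiffOn hsm
  · intro q hq q' hq' h
    simp only [hΨ q hq, hΨ q' hq'] at h
    exact e.symm.injOn hq hq' h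
  · rw [himg]; exact e.open_source
  · refine ⟨Γ, ?_, ?_⟩
    · rw [himg]
      exact hΓ.mono fun z hz => (hsub hz).1
    · intro q hq
      simp only [hΨ q hq]
      rw [← heΓ, e.right_inv hq]
  · intro q hq
    have hz := e.map_target hq
    have hqz : Γ (e.symm q) = q := by rw [← heΓ, e.right_inv hq]
    have hz0 : ((e.symm q).1, (0 : EuclideanSpace ℝ (Fin d))) ∈ e.source := by
      rw [hsrc] at hz ⊢
      rw [Metric.mem_ball, Prod.dist_eq] at hz ⊢
      simp only [dist_self]
      exact max_lt ((le_max_left _ _).trans_lt hz) hr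
    have hΓz0 : Γ ((e.symm q).1, 0) = ((e.symm q).1, (e.symm q).1) := by
      have h0 : g ((e.symm q).1, 0) = 0 := hg0 (e.symm q).1 (e.symm q).2 (hsub hz).1
      simp only [Γ]
      rw [h0, add_zero]
    constructor
    · intro hd
      have hd' : q.1 = q.2 := hd
      have h1 : e ((e.symm q).1, 0) = e (e.symm q) := by
        rw [heΓ, heΓ, hΓz0, hqz, hfst q hq]
        exact Prod.ext rfl hd'
      have h2 := e.injOn hz0 hz h1
      exact (congrArg Prod.snd h2).symm
    · intro h
      have h1 : e.symm q = ((e.symm q).1, 0) := Prod.ext rfl h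
      rw [h1, hΓz0] at hqz
      rw [← hqz]
      rfl
  · intro q hq
    have hz := e.map_target hq
    have hqz : Γ (e.symm q) = q := by rw [← heΓ, e.right_inv hq]
    obtain ⟨x, w, hzz⟩ : ∃ x w, e.symm q = (x, w) := ⟨_, _, rfl⟩
    rw [hzz] at hz hqz
    have hzO : (x, w) ∈ O := (hsub hz).1
    have hgD : HasFDerivAt g (fderiv ℝ g (x, w)) (x, w) :=
      ((hg.contDiffAt (hO.mem_nhds hzO)).differentiableAt (by simp)).hasFDerivAt
    have hΓD := hΓd _ _ hgD
    have hinv : HasFDerivAt e.symm (fderiv ℝ e.symm q) q :=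
      ((hsm.contDiffAt (e.open_target.mem_nhds hq)).differentiableAt (by simp)).hasFDerivAt
    have hcomp : HasFDerivAt (fun z => e.symm (Γ z)) _ (x, w) :=
      HasFDerivAt.comp (x, w) (g := e.symm) (f := Γ) (by rw [hqz]; exact hinv) hΓD
    have hid : HasFDerivAt (fun z => e.symm (Γ z)) (ContinuousLinearMap.id ℝ (Pt d)) (x, w) := by
      refine (hasFDerivAt_id (x, w)).congr_of_eventuallyEq ?_
      filter_upwards [e.open_source.mem_nhds hz] with z hz'
      rw [← heΓ, e.left_inv hz']
      rfl
    have huni := congrArg (fun T => T ((0 : EuclideanSpace ℝ (Fin d)), w)) (hcomp.unique hid)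
    have hXq : (F1.prod (F1 + fderiv ℝ g (x, w))) (0, w) = X q := by
      have hqball : (x, x + g (x, w)) ∈ Metric.ball (x₀, x₀) ρ := (hsub hz).2
      have hq' : (x, x + g (x, w)) = q := hqz
      have h1 := hBrem x (g (x, w)) hqball
      have hqU : q ∈ U := hρU (hq' ▸ hqball)
      have h2 := hode x w hzO
      rw [← h1, hq', EulerNF.rem] at h2
      have h5 : q.2 - q.1 = g (x, w) := by rw [← hq']; exact add_sub_cancel_left _ _
      refine Prod.ext ?_ ?_
      · simp [F1, hX.fiber q hqU]
      · simp only [ContinuousLinearMap.prod_apply, add_apply, F1,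
          ContinuousLinearMap.coe_fst', zero_add]
        rw [h2, h5]
        exact add_sub_cancel _ _
    have h3 : fderiv ℝ e.symm q (X q) = (0, w) := by
      rw [← hXq]
      exact huni
    have h4 : HasFDerivAt (fun q => (e.symm q).2) (F2.comp (fderiv ℝ e.symm q)) q :=
      F2.hasFDerivAt.comp q hinv
    rw [h4.fderiv]
    simp [h3, F2, hzz]
end
end

section
/- Residue vanishing (Corollary 2.9, smooth case): let n ≥ 1, let k ≥ 1 be an integer, and let u : ℝⁿ \ {0} → ℂ be smooth and positively homogeneous of degree −n + k. Then for every multi-index β with |β| = k, the iterated partial derivative ∂^β u (which is smooth and positively homogeneous of degree −n) satisfies ∫_{S^{n−1}} ∂^β u dS = 0. -/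
open Set MeasureTheory

noncomputable section

/-- Iterated partial derivative of a function `ℝⁿ → ℂ` along a list of coordinate
directions; a multi-index `β` with `|β| = k` corresponds to (any) list of length `k`
containing each index `i` exactly `βᵢ` times. -/
def multiPartialDeriv {n : ℕ} : List (Fin n) →
    (EuclideanSpace ℝ (Fin n) → ℂ) → (EuclideanSpace ℝ (Fin n) → ℂ)
  | [], f => f
  | i :: L, f => fun ξ => fderiv ℝ (multiPartialDeriv L f) ξ (EuclideanSpace.single i 1)

open Filter Topology

theorem rv_integrableOn {n : ℕ} {μ : Measure (EuclideanSpace ℝ (Fin n))}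
    {f : EuclideanSpace ℝ (Fin n) → ℂ}
    (hμ : μ (Metric.sphere 0 1) < ⊤) (hf : ContinuousOn f (Metric.sphere 0 1)) :
    IntegrableOn f (Metric.sphere 0 1) μ := by
  obtain ⟨C, hC⟩ := (isCompact_sphere (0 : EuclideanSpace ℝ (Fin n)) 1).exists_bound_of_continuousOn hf
  have : IsFiniteMeasure (μ.restrict (Metric.sphere 0 1)) := ⟨by simpa using hμ⟩
  refine Integrable.of_bound
    (hf.aestronglyMeasurable Metric.isClosed_sphere.measurableSet) C ?_
  exact (ae_restrict_iff' Metric.isClosed_sphere.measurableSet).2 (ae_of_all _ hC)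

theorem rv_preimage {n : ℕ} (R : EuclideanSpace ℝ (Fin n) ≃ₗᵢ[ℝ] EuclideanSpace ℝ (Fin n)) :
    R ⁻¹' (Metric.sphere 0 1) = Metric.sphere 0 1 := by
  ext x; simp

theorem rv_invariant {n : ℕ} (d : ℝ)
    (R : EuclideanSpace ℝ (Fin n) ≃ₗᵢ[ℝ] EuclideanSpace ℝ (Fin n))
    (g : EuclideanSpace ℝ (Fin n) → ℂ) :
    ∫ x in Metric.sphere 0 1, g (R x) ∂μH[d] = ∫ x in Metric.sphere 0 1, g x ∂μH[d] := by
  have h := (R.toIsometryEquiv.measurePreserving_hausdorffMeasure d).setIntegral_preimage_emb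
    R.toHomeomorph.measurableEmbedding g (Metric.sphere 0 1)
  have h2 : (R.toIsometryEquiv) ⁻¹' (Metric.sphere 0 1) = Metric.sphere 0 1 := rv_preimage R
  rw [h2] at h
  exact h

/-- a rotational derivative integrates to zero -/
theorem rv_rot {n : ℕ} (d : ℝ)
    (hμ : μH[d] (Metric.sphere (0 : EuclideanSpace ℝ (Fin n)) 1) < ⊤)
    (g : EuclideanSpace ℝ (Fin n) → ℂ) (hg : ContDiffOn ℝ 1 g {0}ᶜ)
    (A : EuclideanSpace ℝ (Fin n) →L[ℝ] EuclideanSpace ℝ (Fin n))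
    (hA : A ∈ skewAdjoint (EuclideanSpace ℝ (Fin n) →L[ℝ] EuclideanSpace ℝ (Fin n))) :
    ContinuousOn (fun x => fderiv ℝ g x (A x)) (Metric.sphere 0 1) ∧
    ∫ x in Metric.sphere 0 1, fderiv ℝ g x (A x) ∂μH[d] = 0 := by
  have hS : Metric.sphere (0 : EuclideanSpace ℝ (Fin n)) 1 ⊆ {0}ᶜ := by
    intro x hx h0
    simp at h0
    subst h0
    simp at hx
  have hc : ContinuousOn (fun x => fderiv ℝ g x (A x)) (Metric.sphere 0 1) :=
    ((hg.continuousOn_fderiv_of_isOpen isOpen_compl_singleton le_rfl).mono hS).clm_apply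
      A.continuous.continuousOn
  refine ⟨hc, ?_⟩
  have hU : ∀ t : ℝ, ∃ R : EuclideanSpace ℝ (Fin n) ≃ₗᵢ[ℝ] EuclideanSpace ℝ (Fin n),
      ∀ x, R x = NormedSpace.exp (t • A) x := by
    intro t
    have h1 : t • A ∈ skewAdjoint (EuclideanSpace ℝ (Fin n) →L[ℝ] EuclideanSpace ℝ (Fin n)) :=
      skewAdjoint.smul_mem t hA
    let _ : NormedAlgebra ℚ (EuclideanSpace ℝ (Fin n) →L[ℝ] EuclideanSpace ℝ (Fin n)) :=
      NormedAlgebra.restrictScalars ℚ ℝ _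
    exact ⟨Unitary.linearIsometryEquiv ⟨_, NormedSpace.exp_mem_unitary_of_mem_skewAdjoint h1⟩,
      fun x => rfl⟩
  choose R hR using hU
  obtain ⟨C, hC⟩ :=
    (isCompact_sphere (0 : EuclideanSpace ℝ (Fin n)) 1).exists_bound_of_continuousOn hc
  have hRS : ∀ t, MapsTo (R t) (Metric.sphere 0 1) (Metric.sphere 0 1) := by
    intro t x hx
    simpa using hx
  have hgc : ContinuousOn g (Metric.sphere 0 1) := hg.continuousOn.mono hS
  have hR0 : ∀ x, R 0 x = x := by
    intro x
    have e : (0 : ℝ) • A = 0 := by ext y; simp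
    rw [hR, e, NormedSpace.exp_zero]
    rfl
  have key := hasDerivAt_integral_of_dominated_loc_of_deriv_le
    (μ := (μH[d]).restrict (Metric.sphere (0 : EuclideanSpace ℝ (Fin n)) 1))
    (F := fun t x => g (R t x)) (F' := fun t x => fderiv ℝ g (R t x) (A (R t x)))
    (x₀ := (0 : ℝ)) (s := univ) (bound := fun _ => C) univ_mem
    (Eventually.of_forall fun t =>
      (hgc.comp (R t).continuous.continuousOn (hRS t)).aestronglyMeasurable
        Metric.isClosed_sphere.measurableSet)
    (rv_integrableOn hμ (hgc.comp (R 0).continuous.continuousOn (hRS 0)))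
    ((hc.comp (R 0).continuous.continuousOn (hRS 0)).aestronglyMeasurable
        Metric.isClosed_sphere.measurableSet)
    ((ae_restrict_iff' Metric.isClosed_sphere.measurableSet).2
      (ae_of_all _ fun x hx t _ => hC _ (hRS t hx)))
    (integrableOn_const hμ.ne)
    ((ae_restrict_iff' Metric.isClosed_sphere.measurableSet).2
      (ae_of_all _ fun x hx t _ => by
        have h1 : HasDerivAt (fun t => R t x) (A (R t x)) t := by
          simp only [hR]
          exact (hasDerivAt_exp_smul_const' (𝕂 := ℝ) A t).clm_apply (hasDerivAt_const t x)
            |>.congr_deriv (by simp)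
        have h2 : HasFDerivAt g (fderiv ℝ g (R t x)) (R t x) :=
          ((hg.differentiableOn one_ne_zero).differentiableAt
            (isOpen_compl_singleton.mem_nhds (hS (hRS t hx)))).hasFDerivAt
        exact h2.comp_hasDerivAt t h1))
  have k2 := key.2
  simp only [rv_invariant, hR0] at k2
  exact k2.unique (hasDerivAt_const _ _)

theorem rv_finite {n : ℕ} (d : ℝ) (f : EuclideanSpace ℝ (Fin n) → ℂ)
    (hf : ContinuousOn f (Metric.sphere 0 1))
    (hi : IntegrableOn f (Metric.sphere 0 1) μH[d])
    (y : EuclideanSpace ℝ (Fin n)) (hy : y ∈ Metric.sphere (0 : EuclideanSpace ℝ (Fin n)) 1)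
    (hfy : f y ≠ 0) :
    μH[d] (Metric.sphere (0 : EuclideanSpace ℝ (Fin n)) 1) < ⊤ := by
  set S := Metric.sphere (0 : EuclideanSpace ℝ (Fin n)) 1 with hSdef
  set U : Set (EuclideanSpace ℝ (Fin n)) := {x | ‖f y‖ / 2 ≤ ‖f x‖} ∩ S with hU
  have hpos : 0 < ‖f y‖ := norm_pos_iff.2 hfy
  have hUfin : μH[d] U < ⊤ := by
    have := hi.measure_norm_ge_lt_top (half_pos hpos)
    rwa [Measure.restrict_apply' Metric.isClosed_sphere.measurableSet] at this
  have hUn : U ∈ 𝓝[S] y := by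
    refine inter_mem ?_ self_mem_nhdsWithin
    have := (hf y hy).norm.eventually (lt_mem_nhds (half_lt_self hpos))
    filter_upwards [this] with x hx using hx.le
  refine (isCompact_sphere _ _).measure_lt_top_of_nhdsWithin ?_
  intro z hz
  have hzy : ‖z‖ = ‖y‖ := by
    rw [mem_sphere_zero_iff_norm] at hz
    rw [hSdef, mem_sphere_zero_iff_norm] at hy
    rw [hz, hy]
  let R := Submodule.reflection (ℝ ∙ (z - y))ᗮ
  have hRz : R z = y := Submodule.reflection_sub hzy
  refine ⟨R ⁻¹' U, ?_, ?_⟩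
  · have ht : Tendsto R (𝓝[S] z) (𝓝[S] y) := by
      rw [← hRz]
      refine R.continuous.continuousWithinAt.tendsto_nhdsWithin ?_
      intro x hx
      simpa [hSdef] using hx
    exact ht hUn
  · have h3 := R.toIsometryEquiv.hausdorffMeasure_preimage d U
    have h4 : μH[d] (R ⁻¹' U) = μH[d] U := h3
    rw [h4]; exact hUfin

/-- smooth and homogeneous of degree `m` -/
def RvHom {n : ℕ} (m : ℤ) (v : EuclideanSpace ℝ (Fin n) → ℂ) : Prop :=
  ContDiffOn ℝ (⊤ : ℕ∞) v {0}ᶜ ∧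
    ∀ r : ℝ, 0 < r → ∀ ξ : EuclideanSpace ℝ (Fin n), ξ ≠ 0 → v (r • ξ) = (r : ℂ) ^ m * v ξ

theorem RvHom.diffAt {n : ℕ} {m : ℤ} {v : EuclideanSpace ℝ (Fin n) → ℂ} (h : RvHom m v)
    {x : EuclideanSpace ℝ (Fin n)} (hx : x ≠ 0) : DifferentiableAt ℝ v x :=
  (h.1.differentiableOn (by simp)).differentiableAt (isOpen_compl_singleton.mem_nhds hx)

theorem RvHom.pderiv {n : ℕ} {m : ℤ} {v : EuclideanSpace ℝ (Fin n) → ℂ} (h : RvHom m v)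
    (w : EuclideanSpace ℝ (Fin n)) : RvHom (m - 1) (fun x => fderiv ℝ v x w) := by
  constructor
  · exact (h.1.fderiv_of_isOpen isOpen_compl_singleton (by simp)).clm_apply contDiffOn_const
  · intro r hr ξ hξ
    have h1 : (fun x => v (r • x)) =ᶠ[𝓝 ξ] ((r : ℂ) ^ m) • v := by
      filter_upwards [isOpen_compl_singleton.mem_nhds hξ] with x hx
      exact h.2 r hr x hx
    have h2 := h1.fderiv_eq (𝕜 := ℝ)
    rw [fderiv_comp_smul, fderiv_const_smul (h.diffAt hξ)] at h2
    have h3 := congrArg (fun T : EuclideanSpace ℝ (Fin n) →L[ℝ] ℂ => T w) h2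
    simp at h3
    have hr' : (r : ℂ) ≠ 0 := by exact_mod_cast hr.ne'
    rw [zpow_sub_one₀ hr']
    field_simp
    rw [mul_comm]
    exact h3

theorem RvHom.euler {n : ℕ} {m : ℤ} {v : EuclideanSpace ℝ (Fin n) → ℂ} (h : RvHom m v)
    {x : EuclideanSpace ℝ (Fin n)} (hx : x ≠ 0) : fderiv ℝ v x x = m * v x := by
  have h1 : HasDerivAt (fun r : ℝ => v (r • x)) (fderiv ℝ v x x) 1 := by
    have a : HasDerivAt (fun r : ℝ => r • x) x 1 := by
      simpa using (hasDerivAt_id (1 : ℝ)).smul_const x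
    have b : HasFDerivAt v (fderiv ℝ v x) ((1 : ℝ) • x) := by
      rw [one_smul]; exact (h.diffAt hx).hasFDerivAt
    exact b.comp_hasDerivAt 1 a
  have h2 : HasDerivAt (fun r : ℝ => (r : ℂ) ^ m * v x) (m * v x) 1 := by
    have a := (hasDerivAt_zpow m (((1 : ℝ) : ℂ)) (Or.inl (by simp))).comp_ofReal
    simpa using a.mul_const (v x)
  refine h1.unique (h2.congr_of_eventuallyEq ?_)
  filter_upwards [lt_mem_nhds (zero_lt_one (α := ℝ))] with r hr using h.2 r hr x hx

theorem RvHom.multi {n : ℕ} {m : ℤ} {v : EuclideanSpace ℝ (Fin n) → ℂ} (h : RvHom m v)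
    (L : List (Fin n)) : RvHom (m - L.length) (multiPartialDeriv L v) := by
  induction L with
  | nil => simpa [multiPartialDeriv] using h
  | cons i L ih =>
    have := ih.pderiv (EuclideanSpace.single i 1)
    simp only [List.length_cons, Nat.cast_add, Nat.cast_one, multiPartialDeriv]
    rwa [sub_sub] at this

/-- the generator of rotations in the plane of the coordinates `i` and `j` -/
def rvGen {n : ℕ} (i j : Fin n) : EuclideanSpace ℝ (Fin n) →L[ℝ] EuclideanSpace ℝ (Fin n) :=
  (EuclideanSpace.proj j : EuclideanSpace ℝ (Fin n) →L[ℝ] ℝ).smulRight (EuclideanSpace.single i 1)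
  - (EuclideanSpace.proj i : EuclideanSpace ℝ (Fin n) →L[ℝ] ℝ).smulRight
    (EuclideanSpace.single j 1)

theorem rvGen_apply {n : ℕ} (i j : Fin n) (x : EuclideanSpace ℝ (Fin n)) :
    rvGen i j x = x j • EuclideanSpace.single i (1 : ℝ) - x i • EuclideanSpace.single j (1 : ℝ) := by
  simp [rvGen]

theorem rvGen_skew {n : ℕ} (i j : Fin n) :
    rvGen i j ∈ skewAdjoint (EuclideanSpace ℝ (Fin n) →L[ℝ] EuclideanSpace ℝ (Fin n)) := by
  rw [skewAdjoint.mem_iff, ContinuousLinearMap.star_eq_adjoint, eq_comm,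
    ContinuousLinearMap.eq_adjoint_iff]
  intro x y
  rw [neg_apply, rvGen_apply, rvGen_apply]
  simp only [inner_neg_left, inner_sub_left, inner_sub_right, inner_smul_left, inner_smul_right,
    EuclideanSpace.inner_single_left, EuclideanSpace.inner_single_right]
  simp
  ring

theorem rv_main {n : ℕ} (d : ℝ)
    (hμ : μH[d] (Metric.sphere (0 : EuclideanSpace ℝ (Fin n)) 1) < ⊤)
    (v : EuclideanSpace ℝ (Fin n) → ℂ) (h : RvHom (1 - (n : ℤ)) v) (i : Fin n) :
    ∫ x in Metric.sphere 0 1, fderiv ℝ v x (EuclideanSpace.single i 1) ∂μH[d] = 0 := by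
  have hg : ∀ j : Fin n, ContDiffOn ℝ 1 (fun x => x j • v x) {0}ᶜ := by
    intro j
    have h1 : ContDiff ℝ 1 (fun x : EuclideanSpace ℝ (Fin n) => x j) :=
      (EuclideanSpace.proj j : EuclideanSpace ℝ (Fin n) →L[ℝ] ℝ).contDiff
    exact h1.contDiffOn.smul (h.1.of_le (by exact_mod_cast le_top))
  have hr := fun j => rv_rot d hμ _ (hg j) (rvGen i j) (rvGen_skew i j)
  have hsum : ∀ x ∈ Metric.sphere (0 : EuclideanSpace ℝ (Fin n)) 1,
      fderiv ℝ v x (EuclideanSpace.single i 1)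
        = ∑ j, fderiv ℝ (fun x => x j • v x) x (rvGen i j x) := by
    intro x hx
    have hx1 : ‖x‖ = 1 := by simpa using hx
    have hx0 : x ≠ 0 := by rintro rfl; simp at hx1
    have hterm : ∀ j, fderiv ℝ (fun x => x j • v x) x (rvGen i j x)
        = ((if i = j then x j else 0 : ℝ) : ℂ) * v x - x i * v x
          + ((x j ^ 2 : ℝ) : ℂ) * fderiv ℝ v x (EuclideanSpace.single i 1)
          - x i * (fderiv ℝ v x (x j • EuclideanSpace.single j (1 : ℝ))) := by
      intro j
      have h1 : HasFDerivAt (fun x : EuclideanSpace ℝ (Fin n) => x j)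
        (EuclideanSpace.proj j : EuclideanSpace ℝ (Fin n) →L[ℝ] ℝ) x :=
        (EuclideanSpace.proj j : EuclideanSpace ℝ (Fin n) →L[ℝ] ℝ).hasFDerivAt
      have h2 : HasFDerivAt (fun x => x j • v x) _ x := h1.smul (h.diffAt hx0).hasFDerivAt
      rw [h2.fderiv, rvGen_apply]
      by_cases hij : i = j
      · subst hij
        simp
        ring
      · have hji : j ≠ i := fun e => hij e.symm
        simp [hij, hji]
        ring
    simp only [hterm, Finset.sum_add_distrib, Finset.sum_sub_distrib, ← Finset.sum_mul,
      ← Finset.mul_sum, ← map_sum, ← Complex.ofReal_sum]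
    have e1 : ∑ j, x j • EuclideanSpace.single j (1 : ℝ) = x := by
      ext k
      simp [Finset.sum_apply, Pi.single_apply]
    have e2 : ∑ j, x j ^ 2 = 1 := by
      rw [← EuclideanSpace.real_norm_sq_eq, hx1]; norm_num
    rw [e1, e2, h.euler hx0]
    simp
    ring
  rw [setIntegral_congr_fun Metric.isClosed_sphere.measurableSet hsum,
    integral_finsetSum _ (fun j _ => rv_integrableOn hμ (hr j).1)]
  exact Finset.sum_eq_zero fun j _ => (hr j).2

/-- residue vanishing, Corollary 2.9, smooth case: if `u : ℝⁿ \ {0} → ℂ`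
is smooth and positively homogeneous of degree `−n + k` with `k ≥ 1`, then for every
multi-index `β` with `|β| = k` (encoded as a list of `k` coordinate directions) the
iterated partial derivative `∂^β u` has vanishing integral over the unit sphere
(with its `(n−1)`-dimensional Hausdorff surface measure). -/
theorem residue_vanishing {n : ℕ} (hn : 1 ≤ n) (k : ℕ) (hk : 1 ≤ k)
    (u : EuclideanSpace ℝ (Fin n) → ℂ)
    (hu : ContDiffOn ℝ (⊤ : ℕ∞) u {(0 : EuclideanSpace ℝ (Fin n))}ᶜ)
    (hhom : ∀ r : ℝ, 0 < r → ∀ ξ : EuclideanSpace ℝ (Fin n), ξ ≠ 0 →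
      u (r • ξ) = (r : ℂ) ^ ((k : ℤ) - (n : ℤ)) * u ξ) :
    ∀ L : List (Fin n), L.length = k →
      ∫ ξ in Metric.sphere (0 : EuclideanSpace ℝ (Fin n)) 1,
        multiPartialDeriv L u ξ ∂μH[(n : ℝ) - 1] = 0 := by
  intro L hL
  have hU : RvHom ((k : ℤ) - n) u := ⟨hu, hhom⟩
  cases L with
  | nil => simp at hL; omega
  | cons i L =>
    have hv := hU.multi L
    have e : (k : ℤ) - n - L.length = 1 - n := by
      simp at hL; omega
    rw [e] at hv
    have hc : ContinuousOn (multiPartialDeriv (i :: L) u)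
        (Metric.sphere (0 : EuclideanSpace ℝ (Fin n)) 1) := by
      refine (hU.multi (i :: L)).1.continuousOn.mono ?_
      intro x hx h0
      simp at h0
      subst h0
      simp at hx
    by_cases hi : IntegrableOn (multiPartialDeriv (i :: L) u)
        (Metric.sphere (0 : EuclideanSpace ℝ (Fin n)) 1) μH[(n : ℝ) - 1]
    · by_cases hz : ∀ y ∈ Metric.sphere (0 : EuclideanSpace ℝ (Fin n)) 1,
          multiPartialDeriv (i :: L) u y = 0
      · exact setIntegral_eq_zero_of_forall_eq_zero hz
      · push Not at hz
        obtain ⟨y, hy, hne⟩ := hz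
        exact rv_main _ (rv_finite _ _ hc hi y hy hne) _ hv i
    · exact integral_undef hi
end
end

section
/- Meromorphic continuation of the Laplace transform of a tame log-polyhomogeneous scaling expansion (scalar model of the Pollicott–Ruelle resonance expansion of Section 2.4): let p ∈ ℤ, let (a_k)_{k ≥ p} and (b_k)_{k ≥ p} be complex sequences, and let g : [0, ∞) → ℂ be continuous and satisfy: for every integer N ≥ p and every ε > 0 there is C ≥ 0 with |g(t) − Σ_{k=p}^N e^{−kt}(a_k + t·b_k)| ≤ C e^{−(N+1−ε)t} for all t ≥ 0. Then: (i) for every s ∈ ℂ with Re s > −p the function t ↦ e^{−st} g(t) is integrable on [0, ∞); and (ii) there exists a function F, holomorphic on ℂ \ {−k : k ∈ ℤ, k ≥ p}, such that F(s) = ∫₀^∞ e^{−st} g(t) dt whenever Re s > −p, and for every integer N ≥ p the function s ↦ F(s) − Σ_{k=p}^N ( a_k/(s+k) + b_k/(s+k)² ) extends holomorphically to the half-plane {s : Re s > −(N+1)}. In particular F is meromorphic on ℂ with poles of order at most 2 located in {−k : k ≥ p}. -/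
open Set MeasureTheory

noncomputable section

lemma lap_aux_meas (r : ℝ → ℂ) (hr : ContinuousOn r (Ici 0)) (s : ℂ) :
    AEStronglyMeasurable (fun t : ℝ => Complex.exp (-s * (t : ℂ)) * r t)
      (volume.restrict (Ici 0)) := by
  refine ContinuousOn.aestronglyMeasurable ?_ measurableSet_Ici
  exact ContinuousOn.mul (by fun_prop) hr

lemma lap_exp_int {d : ℝ} (hd : 0 < d) (C : ℝ) :
    Integrable (fun t : ℝ => C * Real.exp (-d * t)) (volume.restrict (Ici 0)) := by
  have := (integrableOn_Ici_iff_integrableOn_Ioi (μ := volume)).2 (exp_neg_integrableOn_Ioi 0 hd)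
  exact Integrable.const_mul this C

lemma lap_norm_exp (s : ℂ) (t : ℝ) : ‖Complex.exp (-s * (t : ℂ))‖ = Real.exp (-s.re * t) := by
  rw [Complex.norm_exp]; simp

lemma lap_integrable (r : ℝ → ℂ) (hr : ContinuousOn r (Ici 0)) (c C : ℝ)
    (hb : ∀ t : ℝ, 0 ≤ t → ‖r t‖ ≤ C * Real.exp (-c * t)) (s : ℂ) (hs : -c < s.re) :
    IntegrableOn (fun t : ℝ => Complex.exp (-s * (t : ℂ)) * r t) (Ici 0) := by
  refine Integrable.mono' (lap_exp_int (d := s.re + c) (by linarith) C)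
    (lap_aux_meas r hr s) ?_
  refine (ae_restrict_iff' measurableSet_Ici).2 (Filter.Eventually.of_forall fun t ht => ?_)
  rw [norm_mul, lap_norm_exp]
  calc Real.exp (-s.re * t) * ‖r t‖ ≤ Real.exp (-s.re * t) * (C * Real.exp (-c * t)) := by
        gcongr; exact hb t ht
    _ = C * (Real.exp (-s.re * t) * Real.exp (-c * t)) := by ring
    _ = C * Real.exp (-(s.re + c) * t) := by rw [← Real.exp_add]; ring_nf

lemma lap_diff (r : ℝ → ℂ) (hr : ContinuousOn r (Ici 0)) (c C : ℝ) (hC : 0 ≤ C)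
    (hb : ∀ t : ℝ, 0 ≤ t → ‖r t‖ ≤ C * Real.exp (-c * t)) (s : ℂ) (hs : -c < s.re) :
    HasDerivAt (fun s : ℂ => ∫ t in Ici (0 : ℝ), Complex.exp (-s * (t : ℂ)) * r t)
      (∫ t in Ici (0 : ℝ), Complex.exp (-s * (t : ℂ)) * (-(t : ℂ) * r t)) s := by
  set d := (s.re + c) / 3 with hd
  have hd0 : 0 < d := by rw [hd]; linarith
  have key := hasDerivAt_integral_of_dominated_loc_of_deriv_le
    (μ := volume.restrict (Ici (0 : ℝ)))
    (F := fun (s : ℂ) (t : ℝ) => Complex.exp (-s * (t : ℂ)) * r t)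
    (F' := fun (s : ℂ) (t : ℝ) => Complex.exp (-s * (t : ℂ)) * (-(t : ℂ) * r t))
    (x₀ := s) (bound := fun t => (C / d) * Real.exp (-d * t))
    (Metric.ball_mem_nhds s hd0)
    (Filter.Eventually.of_forall fun z => lap_aux_meas r hr z)
    (lap_integrable r hr c C hb s hs)
    (lap_aux_meas _ (ContinuousOn.mul (by fun_prop) hr) s)
    ?_ (lap_exp_int hd0 _) ?_
  · exact key.2
  · refine (ae_restrict_iff' measurableSet_Ici).2 (Filter.Eventually.of_forall fun t ht z hz => ?_)
    have ht0 : (0 : ℝ) ≤ t := ht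
    have hz' : s.re - d < z.re := by
      have h1 : |(z - s).re| < d :=
        lt_of_le_of_lt (Complex.abs_re_le_norm _) (by simpa [dist_eq_norm] using hz)
      rw [Complex.sub_re, abs_lt] at h1
      linarith [h1.1]
    have htd : t ≤ Real.exp (d * t) / d := by
      rw [le_div_iff₀ hd0]
      nlinarith [Real.add_one_le_exp (d * t)]
    rw [norm_mul, norm_mul, lap_norm_exp, norm_neg, Complex.norm_real, Real.norm_eq_abs,
      abs_of_nonneg ht0]
    calc Real.exp (-z.re * t) * (t * ‖r t‖)
        ≤ Real.exp (-(s.re - d) * t) * (Real.exp (d * t) / d * (C * Real.exp (-c * t))) := by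
          gcongr
          exact hb t ht0
      _ = C / d * (Real.exp (-(s.re - d) * t) * Real.exp (d * t) * Real.exp (-c * t)) := by ring
      _ = C / d * Real.exp (-d * t) := by
          rw [← Real.exp_add, ← Real.exp_add]
          congr 2
          have : s.re = 3 * d - c := by rw [hd]; ring
          rw [this]; ring
  · refine Filter.Eventually.of_forall fun t z _ => ?_
    have h : HasDerivAt (fun z : ℂ => -z * (t : ℂ)) (-1 * (t : ℂ)) z :=
      ((hasDerivAt_id z).neg).mul_const _
    have := (h.cexp).mul_const (r t)
    refine this.congr_deriv ?_
    ring

lemma lap_term (z a b : ℂ) (hz : 0 < z.re) :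
    IntegrableOn (fun t : ℝ => Complex.exp (-z * (t : ℂ)) * (a + (t : ℂ) * b)) (Ici 0) ∧
    ∫ t in Ici (0 : ℝ), Complex.exp (-z * (t : ℂ)) * (a + (t : ℂ) * b) = a / z + b / z ^ 2 := by
  have hz0 : z ≠ 0 := by rintro rfl; simp at hz
  have i1 : IntegrableOn (fun t : ℝ => Complex.exp (-z * (t : ℂ)) * 1) (Ici 0) :=
    lap_integrable (fun _ => 1) continuousOn_const 0 1 (by simp) z (by simpa using hz)
  have i2 : IntegrableOn (fun t : ℝ => Complex.exp (-z * (t : ℂ)) * (t : ℂ)) (Ici 0) := by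
    refine lap_integrable (fun t => (t : ℂ)) (by fun_prop) (-(z.re / 2)) (1 / (z.re / 2)) ?_ z
      (by linarith)
    intro t ht
    rw [Complex.norm_real, Real.norm_eq_abs, abs_of_nonneg ht, neg_neg, one_div_mul_eq_div,
      le_div_iff₀ (by linarith)]
    nlinarith [Real.add_one_le_exp (z.re / 2 * t)]
  have e1' : ∀ z : ℂ, 0 < z.re →
      ∫ t in Ici (0 : ℝ), Complex.exp (-z * (t : ℂ)) * 1 = z⁻¹ := by
    intro z hz
    rw [integral_Ici_eq_integral_Ioi]
    have := integral_exp_mul_complex_Ioi (a := -z) (by simpa using hz) 0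
    simpa using this
  have e1 := e1' z hz
  have e2 : ∫ t in Ici (0 : ℝ), Complex.exp (-z * (t : ℂ)) * (t : ℂ) = 1 / z ^ 2 := by
    have hd := lap_diff (fun _ => 1) continuousOn_const 0 1 zero_le_one (by simp) z
      (by simpa using hz)
    have hopen : IsOpen {z : ℂ | 0 < z.re} := isOpen_lt continuous_const Complex.continuous_re
    have hd2 : HasDerivAt (fun s : ℂ => ∫ t in Ici (0 : ℝ), Complex.exp (-s * (t : ℂ)) * 1)
        (-(z ^ 2)⁻¹) z := by
      refine (hasDerivAt_inv hz0).congr_of_eventuallyEq ?_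
      filter_upwards [hopen.mem_nhds hz] with w hw
      exact e1' w hw
    have h := hd.unique hd2
    simp only [mul_one, mul_neg, integral_neg, neg_inj] at h
    rw [h, one_div]
  have hfun : (fun t : ℝ => Complex.exp (-z * (t : ℂ)) * (a + (t : ℂ) * b)) =
      fun t : ℝ => a * (Complex.exp (-z * (t : ℂ)) * 1) +
        b * (Complex.exp (-z * (t : ℂ)) * (t : ℂ)) := by
    ext t; ring
  rw [hfun]
  refine ⟨(i1.const_mul a).add (i2.const_mul b), ?_⟩
  rw [integral_add (i1.const_mul a) (i2.const_mul b), integral_const_mul, integral_const_mul,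
    e1, e2]
  ring

/-- Adding finitely many explicit terms. -/
lemma lap_sum (S : Finset ℤ) (a b : ℤ → ℂ) (r : ℝ → ℂ) (s : ℂ)
    (hr : IntegrableOn (fun t : ℝ => Complex.exp (-s * (t : ℂ)) * r t) (Ici 0))
    (hS : ∀ k ∈ S, -(k : ℝ) < s.re) (q : ℝ → ℂ)
    (hq : ∀ t, q t = r t + ∑ k ∈ S, Complex.exp (-(k : ℂ) * (t : ℂ)) * (a k + (t : ℂ) * b k)) :
    IntegrableOn (fun t : ℝ => Complex.exp (-s * (t : ℂ)) * q t) (Ici 0) ∧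
    ∫ t in Ici (0 : ℝ), Complex.exp (-s * (t : ℂ)) * q t =
      (∫ t in Ici (0 : ℝ), Complex.exp (-s * (t : ℂ)) * r t) +
        ∑ k ∈ S, (a k / (s + (k : ℂ)) + b k / (s + (k : ℂ)) ^ 2) := by
  have hfun : (fun t : ℝ => Complex.exp (-s * (t : ℂ)) * q t) =
      fun t : ℝ => Complex.exp (-s * (t : ℂ)) * r t +
        ∑ k ∈ S, Complex.exp (-(s + (k : ℂ)) * (t : ℂ)) * (a k + (t : ℂ) * b k) := by
    ext t
    rw [hq, mul_add, Finset.mul_sum]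
    congr 1
    refine Finset.sum_congr rfl fun k _ => ?_
    rw [← mul_assoc, ← Complex.exp_add]
    ring_nf
  have ht : ∀ k ∈ S, 0 < (s + (k : ℂ)).re := by
    intro k hk
    have := hS k hk
    simp; linarith
  have hi := integrable_finsetSum (μ := volume.restrict (Ici (0 : ℝ))) S
    (f := fun k (t : ℝ) => Complex.exp (-(s + (k : ℂ)) * (t : ℂ)) * (a k + (t : ℂ) * b k))
    fun k hk => (lap_term _ (a k) (b k) (ht k hk)).1
  rw [hfun]
  refine ⟨Integrable.add hr hi, ?_⟩
  rw [integral_add hr hi, integral_finsetSum S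
    fun k hk => (lap_term _ (a k) (b k) (ht k hk)).1]
  congr 1
  exact Finset.sum_congr rfl fun k hk => (lap_term _ (a k) (b k) (ht k hk)).2

/-- meromorphic continuation of the Laplace transform of a tame
log-polyhomogeneous scaling expansion; scalar model of the Pollicott–Ruelle resonance
expansion: if `g : [0,∞) → ℂ` is continuous and admits, for every `N ≥ p` and `ε > 0`,
the expansion `g(t) = Σ_{k=p}^N e^{−kt}(a_k + t b_k) + O(e^{−(N+1−ε)t})`, then
(i) `t ↦ e^{−st} g(t)` is integrable on `[0,∞)` for `Re s > −p`, and (ii) the Laplace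
transform extends to a function `F` holomorphic on `ℂ \ {−k : k ∈ ℤ, k ≥ p}` such that
for each `N ≥ p` the difference `F(s) − Σ_{k=p}^N (a_k/(s+k) + b_k/(s+k)²)` extends
holomorphically to `{Re s > −(N+1)}`. -/
theorem laplace_meromorphic_continuation (p : ℤ) (a b : ℤ → ℂ) (g : ℝ → ℂ)
    (hg : ContinuousOn g (Set.Ici (0 : ℝ)))
    (hexp : ∀ N : ℤ, p ≤ N → ∀ ε : ℝ, 0 < ε → ∃ C : ℝ, 0 ≤ C ∧ ∀ t : ℝ, 0 ≤ t →
      ‖g t - ∑ k ∈ Finset.Icc p N,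
          Complex.exp (-(k : ℂ) * (t : ℂ)) * (a k + (t : ℂ) * b k)‖
        ≤ C * Real.exp (-((N : ℝ) + 1 - ε) * t)) :
    (∀ s : ℂ, -(p : ℝ) < s.re →
      IntegrableOn (fun t : ℝ => Complex.exp (-s * (t : ℂ)) * g t) (Set.Ici 0)) ∧
    ∃ F : ℂ → ℂ,
      DifferentiableOn ℂ F {s : ℂ | ∀ k : ℤ, p ≤ k → s ≠ -(k : ℂ)} ∧
      (∀ s : ℂ, -(p : ℝ) < s.re →
        F s = ∫ t in Set.Ici (0 : ℝ), Complex.exp (-s * (t : ℂ)) * g t) ∧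
      ∀ N : ℤ, p ≤ N → ∃ G : ℂ → ℂ,
        DifferentiableOn ℂ G {s : ℂ | -((N : ℝ) + 1) < s.re} ∧
        ∀ s : ℂ, -((N : ℝ) + 1) < s.re → (∀ k ∈ Finset.Icc p N, s ≠ -(k : ℂ)) →
          G s = F s - ∑ k ∈ Finset.Icc p N,
            (a k / (s + (k : ℂ)) + b k / (s + (k : ℂ)) ^ 2) := by
  classical
  set r : ℤ → ℝ → ℂ := fun N t => g t - ∑ k ∈ Finset.Icc p N,
    Complex.exp (-(k : ℂ) * (t : ℂ)) * (a k + (t : ℂ) * b k) with hrdef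
  have hrc : ∀ N, ContinuousOn (r N) (Ici 0) := fun N =>
    hg.sub (Continuous.continuousOn (by fun_prop))
  set H : ℤ → ℂ → ℂ := fun N s => ∫ t in Ici (0 : ℝ), Complex.exp (-s * (t : ℂ)) * r N t with hH
  set T : ℤ → ℂ → ℂ := fun N s => ∑ k ∈ Finset.Icc p N,
    (a k / (s + (k : ℂ)) + b k / (s + (k : ℂ)) ^ 2) with hT
  have hint : ∀ N, p ≤ N → ∀ s : ℂ, -((N : ℝ) + 1) < s.re →
      IntegrableOn (fun t : ℝ => Complex.exp (-s * (t : ℂ)) * r N t) (Ici 0) := by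
    intro N hN s hs
    obtain ⟨C, hC, hb⟩ := hexp N hN ((s.re + (N + 1)) / 2) (by linarith)
    exact lap_integrable (r N) (hrc N) _ C hb s (by linarith)
  have hHd : ∀ N, p ≤ N → ∀ s : ℂ, -((N : ℝ) + 1) < s.re → DifferentiableAt ℂ (H N) s := by
    intro N hN s hs
    obtain ⟨C, hC, hb⟩ := hexp N hN ((s.re + (N + 1)) / 2) (by linarith)
    exact (lap_diff (r N) (hrc N) _ C hC hb s (by linarith)).differentiableAt
  have hcons : ∀ N M, p ≤ N → N ≤ M → ∀ s : ℂ, -((N : ℝ) + 1) < s.re →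
      H N s + T N s = H M s + T M s := by
    intro N M hN hNM s hs
    have hun : Finset.Icc p M = Finset.Icc p N ∪ Finset.Icc (N + 1) M := by
      ext x; simp only [Finset.mem_union, Finset.mem_Icc]; omega
    have hdis : Disjoint (Finset.Icc p N) (Finset.Icc (N + 1) M) := by
      rw [Finset.disjoint_left]; intro x; simp only [Finset.mem_Icc]; omega
    have hNM' : (N : ℝ) ≤ M := by exact_mod_cast hNM
    have := (lap_sum (Finset.Icc (N + 1) M) a b (r M) s
      (hint M (hN.trans hNM) s (by linarith)) (by
        intro k hk
        have : N + 1 ≤ k := (Finset.mem_Icc.1 hk).1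
        have : (N : ℝ) + 1 ≤ k := by exact_mod_cast this
        linarith) (r N) (by
        intro t
        simp only [hrdef]
        rw [hun, Finset.sum_union hdis]
        ring)).2
    simp only [hH, hT]
    rw [this, hun, Finset.sum_union hdis]
    ring
  have hp : ∀ s : ℂ, -(p : ℝ) < s.re →
      IntegrableOn (fun t : ℝ => Complex.exp (-s * (t : ℂ)) * g t) (Set.Ici 0) ∧
      ∫ t in Set.Ici (0 : ℝ), Complex.exp (-s * (t : ℂ)) * g t = H p s + T p s := by
    intro s hs
    exact lap_sum (Finset.Icc p p) a b (r p) s (hint p le_rfl s (by linarith)) (by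
      intro k hk
      have : k = p := by simpa using hk
      rw [this]; exact hs) g (by intro t; simp only [hrdef]; ring)
  refine ⟨fun s hs => (hp s hs).1, ?_⟩
  set m : ℂ → ℤ := fun s => max p ⌈-s.re⌉ with hm
  have hmp : ∀ s, p ≤ m s := fun s => le_max_left _ _
  have hms : ∀ s : ℂ, -((m s : ℝ) + 1) < s.re := by
    intro s
    have h1 : -s.re ≤ (⌈-s.re⌉ : ℝ) := Int.le_ceil _
    have h2 : (⌈-s.re⌉ : ℝ) ≤ (m s : ℝ) := by exact_mod_cast le_max_right p ⌈-s.re⌉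
    linarith
  have hF : ∀ N, p ≤ N → ∀ s : ℂ, -((N : ℝ) + 1) < s.re →
      H (m s) s + T (m s) s = H N s + T N s := by
    intro N hN s hs
    rcases le_total N (m s) with h | h
    · exact (hcons N (m s) hN h s hs).symm
    · exact hcons (m s) N (hmp s) h s (hms s)
  refine ⟨fun s => H (m s) s + T (m s) s, ?_, ?_, ?_⟩
  · intro s hs
    apply DifferentiableAt.differentiableWithinAt
    have hTd : DifferentiableAt ℂ (T (m s)) s := by
      apply DifferentiableAt.fun_sum
      intro k hk
      have hk0 : s + (k : ℂ) ≠ 0 := fun h =>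
        hs k (Finset.mem_Icc.1 hk).1 (eq_neg_of_add_eq_zero_left h)
      have hk2 : (s + (k : ℂ)) ^ 2 ≠ 0 := pow_ne_zero _ hk0
      fun_prop (disch := assumption)
    refine ((hHd (m s) (hmp s) s (hms s)).add hTd).congr_of_eventuallyEq ?_
    have hopen : IsOpen {z : ℂ | -((m s : ℝ) + 1) < z.re} :=
      isOpen_lt continuous_const Complex.continuous_re
    filter_upwards [hopen.mem_nhds (hms s)] with z hz
    exact hF (m s) (hmp s) z hz
  · intro s hs
    rw [(hp s hs).2]
    exact hF p le_rfl s (by linarith)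
  · intro N hN
    refine ⟨H N, fun s hs => (hHd N hN s hs).differentiableWithinAt, ?_⟩
    intro s hs _
    have := hF N hN s hs
    simp only [this]
    simp only [hT]
    ring
end
end

section
/- Exponential contraction towards the diagonal along the backward flow (Step 1 of the proof of Proposition 2.5, with f the squared Euclidean distance to the diagonal): let X be an Euler vector field on an open set U ⊆ ℝ^d × ℝ^d. Then there exists an open set 𝒰 with Δ ∩ U ⊆ 𝒰 ⊆ U such that: (i) every C¹ curve γ : [0, T] → U with γ′(t) = −X(γ(t)) and γ(0) ∈ 𝒰 remains in 𝒰; and (ii) writing γ(t) = (x(t), y(t)) ∈ ℝ^d × ℝ^d, every C¹ curve γ : [0, T] → 𝒰 with γ′(t) = −X(γ(t)) satisfies |x(t) − y(t)|² ≤ e^{−(3/2)t} |x(0) − y(0)|² for all t ∈ [0, T]. -/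
open Set

noncomputable section

/-- The deviation of the vector field from the standard Euler field. -/
def devField {d : ℕ} (X : Pt d → Pt d) (q : Pt d) : EuclideanSpace ℝ (Fin d) :=
  (X q).2 - (X q).1 - (q.2 - q.1)

lemma devField_contDiffOn {d : ℕ} {X : Pt d → Pt d} {U : Set (Pt d)}
    (hX : IsEulerVF X U) : ContDiffOn ℝ (⊤ : ℕ∞) (devField X) U := by
  have h := hX.smooth
  have h1 : ContDiffOn ℝ (⊤ : ℕ∞) (fun q => (X q).1) U := contDiff_fst.comp_contDiffOn h
  have h2 : ContDiffOn ℝ (⊤ : ℕ∞) (fun q => (X q).2) U := contDiff_snd.comp_contDiffOn h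
  exact (h2.sub h1).sub (contDiff_snd.sub contDiff_fst).contDiffOn

lemma devField_comp {d : ℕ} (X : Pt d → Pt d) (L : EuclideanSpace ℝ (Fin d) →L[ℝ] ℝ) :
    (fun q => vfApply X (fun p : Pt d => L (p.2 - p.1)) q - L (q.2 - q.1))
      = fun q => L (devField X q) := by
  funext q
  have : HasFDerivAt (fun p : Pt d => L (p.2 - p.1))
      (L.comp (ContinuousLinearMap.snd ℝ _ _ - ContinuousLinearMap.fst ℝ _ _)) q :=
    (L.comp (ContinuousLinearMap.snd ℝ (EuclideanSpace ℝ (Fin d)) (EuclideanSpace ℝ (Fin d))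
      - ContinuousLinearMap.fst ℝ _ _)).hasFDerivAt
  simp only [vfApply]
  rw [this.fderiv]
  simp [devField]

lemma devField_vanish {d : ℕ} {X : Pt d → Pt d} {U : Set (Pt d)}
    (hX : IsEulerVF X U) (L : EuclideanSpace ℝ (Fin d) →L[ℝ] ℝ) :
    VanishesToOrder 2 (fun q => L (devField X q)) U := by
  rw [← devField_comp]
  apply hX.euler (fun p : Pt d => L (p.2 - p.1))
  · exact (L.contDiff.comp (contDiff_snd.sub contDiff_fst)).contDiffOn
  · rintro p ⟨hp, -⟩
    have : p.1 = p.2 := hp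
    simp [this]

lemma devField_zero {d : ℕ} {X : Pt d → Pt d} {U : Set (Pt d)}
    (hX : IsEulerVF X U) {p : Pt d} (hp : p ∈ Diag d ∩ U) : devField X p = 0 := by
  ext i
  have h := devField_vanish hX (EuclideanSpace.proj i) 0 (by norm_num) p hp
  have := congrArg (fun m => m 0) h
  simpa using this

lemma devField_fderiv_zero {d : ℕ} {X : Pt d → Pt d} {U : Set (Pt d)} (hU : IsOpen U)
    (hX : IsEulerVF X U) {p : Pt d} (hp : p ∈ Diag d ∩ U) : fderiv ℝ (devField X) p = 0 := by
  refine ContinuousLinearMap.ext fun v => ?_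
  ext i
  have h := devField_vanish hX (EuclideanSpace.proj i) 1 (by norm_num) p hp
  have h2 := congrArg (fun m => m (fun _ => v)) h
  have hd : DifferentiableAt ℝ (devField X) p :=
    ((devField_contDiffOn hX).contDiffAt (hU.mem_nhds hp.2)).differentiableAt (by simp)
  have h3 := ((EuclideanSpace.proj i : EuclideanSpace ℝ (Fin d) →L[ℝ] ℝ).hasFDerivAt.comp p
    hd.hasFDerivAt).fderiv
  simp only [iteratedFDeriv_one_apply] at h2
  change fderiv ℝ (⇑(EuclideanSpace.proj i : EuclideanSpace ℝ (Fin d) →L[ℝ] ℝ) ∘ devField X) p v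
    = 0 at h2
  rw [h3] at h2
  simpa using h2

lemma devField_local {d : ℕ} {X : Pt d → Pt d} {U : Set (Pt d)} (hU : IsOpen U)
    (hX : IsEulerVF X U) {p : Pt d} (hp : p ∈ Diag d ∩ U) :
    ∃ ε > 0, Metric.ball p ε ⊆ U ∧
      ∀ q ∈ Metric.ball p ε, ‖devField X q‖ ≤ 1 / 4 * ‖q.1 - q.2‖ := by
  have hs := devField_contDiffOn hX
  have hc : ContinuousAt (fderiv ℝ (devField X)) p :=
    (hs.continuousOn_fderiv_of_isOpen hU (by simp)).continuousAt (hU.mem_nhds hp.2)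
  have hlt : ∀ᶠ q in nhds p, ‖fderiv ℝ (devField X) q‖ < 1 / 4 := by
    apply hc.norm.eventually_lt continuousAt_const
    rw [devField_fderiv_zero hU hX hp]
    norm_num
  obtain ⟨ε, hε, hb⟩ := Metric.eventually_nhds_iff_ball.1 (hlt.and (hU.mem_nhds hp.2))
  refine ⟨ε, hε, fun q hq => (hb q hq).2, fun q hq => ?_⟩
  have hpd : p.1 = p.2 := hp.1
  have hq' : ((q.1, q.1) : Pt d) ∈ Metric.ball p ε := by
    rw [Metric.mem_ball, Prod.dist_eq] at hq ⊢
    have := (max_lt_iff.1 hq).1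
    simp only [← hpd]
    simpa using this
  have h0 : devField X (q.1, q.1) = 0 := devField_zero hX ⟨rfl, (hb _ hq').2⟩
  have key := (convex_ball p ε).norm_image_sub_le_of_norm_fderiv_le (𝕜 := ℝ) (f := devField X)
    (C := 1 / 4)
    (fun z hz => (hs.contDiffAt (hU.mem_nhds (hb z hz).2)).differentiableAt (by simp))
    (fun z hz => (hb z hz).1.le) hq' hq
  rw [h0, sub_zero] at key
  refine key.trans (le_of_eq ?_)
  rw [Prod.norm_def]
  simp [norm_sub_rev]

/-- The squared distance to the diagonal along a backward curve. -/
lemma curve_deriv {d : ℕ} {X : Pt d → Pt d} {γ : ℝ → Pt d} {s : Set ℝ} {t : ℝ}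
    (h : HasDerivWithinAt γ (-(X (γ t))) s t) :
    HasDerivWithinAt (fun t => ‖(γ t).1 - (γ t).2‖ ^ 2)
      (2 * inner ℝ ((γ t).1 - (γ t).2) ((X (γ t)).2 - (X (γ t)).1)) s t := by
  have h1 : HasDerivWithinAt (fun t => (γ t).1) (-(X (γ t)).1) s t :=
    (ContinuousLinearMap.fst ℝ (EuclideanSpace ℝ (Fin d))
      (EuclideanSpace ℝ (Fin d))).hasFDerivAt.comp_hasDerivWithinAt t h
  have h2 : HasDerivWithinAt (fun t => (γ t).2) (-(X (γ t)).2) s t :=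
    (ContinuousLinearMap.snd ℝ (EuclideanSpace ℝ (Fin d))
      (EuclideanSpace ℝ (Fin d))).hasFDerivAt.comp_hasDerivWithinAt t h
  have e : (X (γ t)).2 - (X (γ t)).1 = -(X (γ t)).1 - -(X (γ t)).2 := by abel
  rw [e]
  exact (h1.sub h2).norm_sq

lemma inner_bound {d : ℕ} {X : Pt d → Pt d} {q : Pt d}
    (h : ‖devField X q‖ ≤ 1 / 4 * ‖q.1 - q.2‖) :
    2 * inner ℝ (q.1 - q.2) ((X q).2 - (X q).1) ≤ -(3 / 2) * ‖q.1 - q.2‖ ^ 2 := by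
  have e : (X q).2 - (X q).1 = devField X q - (q.1 - q.2) := by
    unfold devField; abel
  rw [e, inner_sub_right, real_inner_self_eq_norm_sq]
  have := real_inner_le_norm (q.1 - q.2) (devField X q)
  nlinarith [norm_nonneg (q.1 - q.2)]

lemma fst_const {d : ℕ} {X : Pt d → Pt d} {U : Set (Pt d)} (hX : IsEulerVF X U)
    {T : ℝ} {γ : ℝ → Pt d} (hγ : ∀ t ∈ Icc (0 : ℝ) T, γ t ∈ U)
    (hd : ∀ t ∈ Icc (0 : ℝ) T, HasDerivWithinAt γ (-(X (γ t))) (Icc (0 : ℝ) T) t) :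
    ∀ t ∈ Icc (0 : ℝ) T, (γ t).1 = (γ 0).1 := by
  have h1 : ∀ t ∈ Icc (0 : ℝ) T, HasDerivWithinAt (fun t => (γ t).1) 0 (Icc (0 : ℝ) T) t := by
    intro t ht
    have := (ContinuousLinearMap.fst ℝ (EuclideanSpace ℝ (Fin d))
      (EuclideanSpace ℝ (Fin d))).hasFDerivAt.comp_hasDerivWithinAt t (hd t ht)
    have e : (ContinuousLinearMap.fst ℝ (EuclideanSpace ℝ (Fin d))
      (EuclideanSpace ℝ (Fin d))) (-(X (γ t))) = 0 := by simp [hX.fiber _ (hγ t ht)]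
    rw [e] at this
    exact this
  exact constant_of_has_deriv_right_zero (f := fun t => (γ t).1)
    (fun t ht => (h1 t ht).continuousWithinAt)
    (fun t ht => (h1 t (Ico_subset_Icc_self ht)).mono_of_mem_nhdsWithin
      (Icc_mem_nhdsGE_of_mem ht))

/-- exponential contraction towards the diagonal along the backward
flow: if `X` is an Euler vector field on an open set `U ⊆ ℝ^d × ℝ^d`, there is an open
set `𝒰` with `Δ ∩ U ⊆ 𝒰 ⊆ U` such that (i) backward-flow curves starting in `𝒰` stay in
`𝒰`, and (ii) along any backward-flow curve `γ(t) = (x(t), y(t))` contained in `𝒰` one has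
`|x(t) − y(t)|² ≤ e^{−(3/2)t} |x(0) − y(0)|²`. -/
theorem euler_exponential_contraction {d : ℕ} {X : Pt d → Pt d} {U : Set (Pt d)}
    (hU : IsOpen U) (hX : IsEulerVF X U) :
    ∃ 𝒰 : Set (Pt d), IsOpen 𝒰 ∧ Diag d ∩ U ⊆ 𝒰 ∧ 𝒰 ⊆ U ∧
      (∀ T : ℝ, 0 ≤ T → ∀ γ : ℝ → Pt d,
        (∀ t ∈ Icc (0 : ℝ) T, γ t ∈ U) →
        (∀ t ∈ Icc (0 : ℝ) T, HasDerivWithinAt γ (-(X (γ t))) (Icc (0 : ℝ) T) t) →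
        γ 0 ∈ 𝒰 → ∀ t ∈ Icc (0 : ℝ) T, γ t ∈ 𝒰) ∧
      (∀ T : ℝ, 0 ≤ T → ∀ γ : ℝ → Pt d,
        (∀ t ∈ Icc (0 : ℝ) T, γ t ∈ 𝒰) →
        (∀ t ∈ Icc (0 : ℝ) T, HasDerivWithinAt γ (-(X (γ t))) (Icc (0 : ℝ) T) t) →
        ∀ t ∈ Icc (0 : ℝ) T,
          ‖(γ t).1 - (γ t).2‖ ^ 2 ≤ Real.exp (-(3 / 2) * t) * ‖(γ 0).1 - (γ 0).2‖ ^ 2) := by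
  have hloc : ∀ p : Pt d, ∃ ε : ℝ, p ∈ Diag d ∩ U → 0 < ε ∧ Metric.ball p ε ⊆ U ∧
      ∀ q ∈ Metric.ball p ε, ‖devField X q‖ ≤ 1 / 4 * ‖q.1 - q.2‖ := by
    intro p
    by_cases hp : p ∈ Diag d ∩ U
    · obtain ⟨ε, h1, h2⟩ := devField_local hU hX hp
      exact ⟨ε, fun _ => ⟨h1, h2⟩⟩
    · exact ⟨0, fun h => absurd h hp⟩
  choose ε hε using hloc
  let N : Pt d → Set (Pt d) := fun p =>
    {q | ‖q.1 - p.1‖ < ε p / 2} ∩ {q | ‖q.1 - q.2‖ < ε p / 2}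
  have hNb : ∀ p ∈ Diag d ∩ U, N p ⊆ Metric.ball p (ε p) := by
    rintro p hp q ⟨h1, h2⟩
    simp only [mem_ofPred_eq] at h1 h2
    have hpd : p.1 = p.2 := hp.1
    rw [Metric.mem_ball, Prod.dist_eq, max_lt_iff, dist_eq_norm, dist_eq_norm, ← hpd]
    refine ⟨by linarith [norm_nonneg (q.1 - p.1)], ?_⟩
    have : q.2 - p.1 = (q.1 - p.1) - (q.1 - q.2) := by abel
    rw [this]
    linarith [norm_sub_le (q.1 - p.1) (q.1 - q.2)]
  refine ⟨⋃ p ∈ Diag d ∩ U, N p, ?_, ?_, ?_, ?_, ?_⟩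
  · refine isOpen_biUnion fun p _ => IsOpen.inter ?_ ?_
    · exact isOpen_lt (by fun_prop) continuous_const
    · exact isOpen_lt (by fun_prop) continuous_const
  · intro p hp
    have hpd : p.1 = p.2 := hp.1
    have := (hε p hp).1
    refine mem_biUnion hp ⟨?_, ?_⟩
    · simpa using this
    · simpa [hpd] using this
  · exact iUnion₂_subset fun p hp => (hNb p hp).trans (hε p hp).2.1
  · intro T hT γ hγ hd h0 t ht
    obtain ⟨p, hp, h1, h2⟩ := mem_iUnion₂.1 h0
    simp only [mem_ofPred_eq] at h1 h2
    have hfst := fst_const hX hγ hd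
    obtain ⟨c, hc1, hc2⟩ := exists_between h2
    have hc0 : 0 < c := (norm_nonneg _).trans_lt hc1
    have hh : ∀ s ∈ Icc (0 : ℝ) T, _ := fun s hs => curve_deriv (hd s hs)
    have key := image_le_of_deriv_right_lt_deriv_boundary
      (f := fun t => ‖(γ t).1 - (γ t).2‖ ^ 2) (B := fun _ => c ^ 2) (B' := fun _ => 0)
      (a := 0) (b := T)
      (fun s hs => (hh s hs).continuousWithinAt)
      (fun s hs => (hh s (Ico_subset_Icc_self hs)).mono_of_mem_nhdsWithin
        (Icc_mem_nhdsGE_of_mem hs))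
      (by simpa using pow_le_pow_left₀ (norm_nonneg _) hc1.le 2)
      (fun s => hasDerivAt_const s _)
      (by
        intro s hs he
        have hsI := Ico_subset_Icc_self hs
        have hsc : ‖(γ s).1 - (γ s).2‖ = c :=
          (pow_left_inj₀ (norm_nonneg _) hc0.le two_ne_zero).1 he
        have hm : γ s ∈ N p := by
          refine ⟨?_, ?_⟩
          · simpa [hfst s hsI] using h1
          · simpa [hsc] using hc2
        have := inner_bound ((hε p hp).2.2 _ (hNb p hp hm))
        rw [hsc] at this
        nlinarith [pow_pos hc0 2])
    have hle := key ht
    refine mem_biUnion hp ⟨?_, ?_⟩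
    · simpa [hfst t ht] using h1
    · exact ((sq_le_sq₀ (norm_nonneg _) hc0.le).1 hle).trans_lt hc2
  · intro T hT γ hγ hd t ht
    have hder : ∀ s ∈ Icc (0 : ℝ) T, HasDerivWithinAt
        (fun s => Real.exp (3 / 2 * s) * ‖(γ s).1 - (γ s).2‖ ^ 2)
        (Real.exp (3 / 2 * s) * (3 / 2) * ‖(γ s).1 - (γ s).2‖ ^ 2 + Real.exp (3 / 2 * s) *
          (2 * inner ℝ ((γ s).1 - (γ s).2) ((X (γ s)).2 - (X (γ s)).1))) (Icc 0 T) s := by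
      intro s hs
      have he : HasDerivAt (fun s : ℝ => Real.exp (3 / 2 * s))
          (Real.exp (3 / 2 * s) * (3 / 2)) s := by
        simpa using ((hasDerivAt_id s).const_mul (3 / 2 : ℝ)).exp
      exact he.hasDerivWithinAt.mul (curve_deriv (hd s hs))
    have hanti : AntitoneOn (fun s => Real.exp (3 / 2 * s) * ‖(γ s).1 - (γ s).2‖ ^ 2)
        (Icc 0 T) := by
      refine antitoneOn_of_hasDerivWithinAt_nonpos (convex_Icc 0 T)
        (fun s hs => (hder s hs).continuousWithinAt)
        (fun s hs => (hder s (interior_subset hs)).mono interior_subset) ?_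
      intro s hs
      obtain ⟨p, hp, hm⟩ := mem_iUnion₂.1 (hγ s (interior_subset hs))
      have := inner_bound ((hε p hp).2.2 _ (hNb p hp hm))
      nlinarith [Real.exp_pos (3 / 2 * s)]
    have h := hanti (left_mem_Icc.2 hT) ht ht.1
    simp only [mul_zero, Real.exp_zero, one_mul] at h
    have hm := mul_le_mul_of_nonneg_left h (Real.exp_pos (-(3 / 2) * t)).le
    rwa [← mul_assoc, ← Real.exp_add, show -(3 / 2) * t + 3 / 2 * t = 0 by ring, Real.exp_zero,
      one_mul] at hm
end
end
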